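/- Let n ≥ 2. There exist constants κ ∈ (0,1) and C > 0, depending only on n, such that: for every bounded measurable W : ℝⁿ → ℝ and every smooth solution u of Δ²u = W·u on B⁺₃ which extends smoothly up to the flat boundary 𝐁₃, one has ‖u‖_{L²(B⁺₁)} ≤ e^{C(1 + ‖W‖_{L^∞}^{1/3})} · ‖u‖_{L²(B⁺₂)}^{κ} · ( Σ_{j=0}^{3} ‖∂_{x_n}^j u‖_{H^{3−j}(𝐁₂)} )^{1−κ}. -/

import Mathlib

open MeasureTheory Metric Set

noncomputable section

/-- The Euclidean Laplacian of `u : ℝⁿ → ℝ`. -/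
def lap {n : ℕ} (u : EuclideanSpace ℝ (Fin n) → ℝ) (x : EuclideanSpace ℝ (Fin n)) : ℝ :=
  ∑ i : Fin n, iteratedFDeriv ℝ 2 u x ![EuclideanSpace.single i 1, EuclideanSpace.single i 1]

def lastIdx (n : ℕ) (h : 0 < n) : Fin n := ⟨n - 1, Nat.sub_lt h one_pos⟩

/-- The open half ball `B⁺_R = {x : |x| < R, xₙ > 0}`. -/
def halfBall (n : ℕ) (h : 0 < n) (R : ℝ) : Set (EuclideanSpace ℝ (Fin n)) :=
  {x | ‖x‖ < R ∧ 0 < x (lastIdx n h)}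

/-- The isometric inclusion of `ℝ^{n-1}` as the hyperplane `{xₙ = 0}` of `ℝⁿ`. -/
def incl (n : ℕ) (y : EuclideanSpace ℝ (Fin (n - 1))) : EuclideanSpace ℝ (Fin n) :=
  (WithLp.equiv 2 (Fin n → ℝ)).symm
    (fun i => if h : (i : ℕ) < n - 1 then y ⟨(i : ℕ), h⟩ else 0)

/-- The partial derivative `∂ᵢ g`. -/
def pd {n : ℕ} (i : Fin n) (g : EuclideanSpace ℝ (Fin n) → ℝ)
    (x : EuclideanSpace ℝ (Fin n)) : ℝ :=
  fderiv ℝ g x (EuclideanSpace.single i 1)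

/-- The multi-index partial derivative `∂^α g`. -/
def mpd {n : ℕ} (α : Fin n → ℕ) (g : EuclideanSpace ℝ (Fin n) → ℝ) :
    EuclideanSpace ℝ (Fin n) → ℝ :=
  (List.finRange n).foldr (fun i h => (pd i)^[α i] h) g

/-- The square of the `H^m` norm of `w` on the boundary disc `𝐁_R`: the sum over tangential
multi-indices `α` with `|α| ≤ m` of `∫_{𝐁_R} |∂^α_{x'} w|²`, with respect to `(n-1)`-dimensional
Lebesgue measure on the hyperplane `{xₙ = 0}`. -/
def bdryHnormSq (n m : ℕ) (R : ℝ) (w : EuclideanSpace ℝ (Fin n) → ℝ) : ℝ :=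
  ∑ α : Fin (n - 1) → Fin (m + 1),
    if (∑ i, (α i : ℕ)) ≤ m then
      ∫ y in ball (0 : EuclideanSpace ℝ (Fin (n - 1))) R,
        (mpd (fun i => (α i : ℕ)) (fun z => w (incl n z)) y) ^ 2
    else 0


section

abbrev En (n : ℕ) := EuclideanSpace ℝ (Fin n)

/-- The algebra of smooth functions. -/
def Sm (n : ℕ) : Subalgebra ℝ (En n → ℝ) where
  carrier := {f | ContDiff ℝ (⊤ : ℕ∞) f}
  mul_mem' := by
    intro f g hf hg
    simp only [Set.mem_ofPred_eq] at hf hg ⊢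
    exact hf.mul hg
  add_mem' := by
    intro f g hf hg
    simp only [Set.mem_ofPred_eq] at hf hg ⊢
    exact hf.add hg
  algebraMap_mem' := by
    intro r
    simp only [Set.mem_ofPred_eq]
    exact (contDiff_const : ContDiff ℝ (⊤ : ℕ∞) (fun _ : En n => r))

variable {n : ℕ}

lemma Sm_cd (f : Sm n) : ContDiff ℝ (⊤ : ℕ∞) f.1 := f.2

lemma Sm_da (f : Sm n) (x : En n) : DifferentiableAt ℝ f.1 x :=
  ((Sm_cd f).differentiable (by simp)) x

lemma Sm_cont (f : Sm n) : Continuous f.1 := (Sm_cd f).continuous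

lemma pd_contDiff {f : En n → ℝ} (hf : ContDiff ℝ (⊤ : ℕ∞) f) (i : Fin n) :
    ContDiff ℝ (⊤ : ℕ∞) (pd i f) := by
  unfold pd
  exact (hf.fderiv_right (m := (⊤ : ℕ∞)) (by simp)).clm_apply contDiff_const

/-- Partial derivative as a derivation. -/
def D (i : Fin n) : Derivation ℝ (Sm n) (Sm n) :=
  Derivation.mk'
    { toFun := fun f => ⟨pd i f.1, pd_contDiff (Sm_cd f) i⟩
      map_add' := by
        intro f g
        ext x
        show fderiv ℝ (f.1 + g.1) x _ = fderiv ℝ f.1 x _ + fderiv ℝ g.1 x _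
        rw [fderiv_add (Sm_da f x) (Sm_da g x)]; rfl
      map_smul' := by
        intro c f
        ext x
        show fderiv ℝ (c • f.1) x _ = c • fderiv ℝ f.1 x _
        rw [fderiv_const_smul (Sm_da f x)]; rfl }
    (by
      intro f g
      ext x
      show fderiv ℝ (f.1 * g.1) x _ = f.1 x * fderiv ℝ g.1 x _ + g.1 x * fderiv ℝ f.1 x _
      rw [fderiv_mul (Sm_da f x) (Sm_da g x)]; rfl)

lemma D_coe (i : Fin n) (f : Sm n) : (D i f).1 = pd i f.1 := rfl

lemma D_mul (i : Fin n) (f g : Sm n) : D i (f * g) = D i f * g + f * D i g := by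
  rw [Derivation.leibniz]; simp only [smul_eq_mul]; ring

lemma D_comm (i j : Fin n) (f : Sm n) : D i (D j f) = D j (D i f) := by
  ext x
  have h2 : ContDiffAt ℝ 2 f.1 x := ((Sm_cd f).of_le (by norm_cast)).contDiffAt
  have hs := h2.isSymmSndFDerivAt (by simp)
  have key : ∀ a b : En n, fderiv ℝ (fun z => fderiv ℝ f.1 z a) x b
      = fderiv ℝ (fderiv ℝ f.1) x b a := by
    intro a b
    have hd : DifferentiableAt ℝ (fderiv ℝ f.1) x :=
      (((Sm_cd f).fderiv_right (m := (⊤ : ℕ∞)) (by simp)).differentiable (by simp)) x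
    rw [fderiv_clm_apply hd (differentiableAt_const _)]
    simp
  show fderiv ℝ (fun z => fderiv ℝ f.1 z _) x _ = fderiv ℝ (fun z => fderiv ℝ f.1 z _) x _
  rw [key, key]
  exact hs _ _

/-- The Laplacian on smooth functions. -/
def L (f : Sm n) : Sm n := ∑ i, D i (D i f)

lemma Sm_sum_apply {ι : Type*} (s : Finset ι) (f : ι → Sm n) (x : En n) :
    (∑ i ∈ s, f i).1 x = ∑ i ∈ s, (f i).1 x := by
  rw [← Finset.sum_apply]
  exact congrFun (map_sum (Sm n).val f s) x

lemma Sm_add (f g : Sm n) (x : En n) : (f + g).1 x = f.1 x + g.1 x := rfl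
lemma Sm_sub (f g : Sm n) (x : En n) : (f - g).1 x = f.1 x - g.1 x := rfl
lemma Sm_neg (f : Sm n) (x : En n) : (-f).1 x = - f.1 x := rfl
lemma Sm_mul (f g : Sm n) (x : En n) : (f * g).1 x = f.1 x * g.1 x := rfl
lemma Sm_pow (f : Sm n) (k : ℕ) (x : En n) : (f ^ k).1 x = (f.1 x) ^ k := rfl
lemma Sm_smul (c : ℝ) (f : Sm n) (x : En n) : (c • f).1 x = c * f.1 x := rfl

lemma L_coe (f : Sm n) : (L f).1 = lap f.1 := by
  funext x
  unfold L lap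
  rw [Sm_sum_apply]
  refine Finset.sum_congr rfl fun i _ => ?_
  rw [iteratedFDeriv_two_apply]
  have hd : DifferentiableAt ℝ (fderiv ℝ f.1) x :=
    (((Sm_cd f).fderiv_right (m := (⊤ : ℕ∞)) (by simp)).differentiable (by simp)) x
  show fderiv ℝ (fun z => fderiv ℝ f.1 z _) x _ = _
  rw [fderiv_clm_apply hd (differentiableAt_const _)]
  simp

/-- Exponential. -/
def Ex (f : Sm n) : Sm n := ⟨fun x => Real.exp (f.1 x), (Sm_cd f).exp⟩

lemma Ex_apply (f : Sm n) (x : En n) : (Ex f).1 x = Real.exp (f.1 x) := rfl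

lemma D_Ex (i : Fin n) (f : Sm n) : D i (Ex f) = Ex f * D i f := by
  ext x
  show fderiv ℝ (fun x => Real.exp (f.1 x)) x _ = Real.exp (f.1 x) * fderiv ℝ f.1 x _
  rw [fderiv_exp (Sm_da f x)]; rfl

/-- Shifted coordinates. -/
def Y (b : En n) (i : Fin n) : Sm n := ⟨fun x => x i + b i, by
  show ContDiff ℝ (⊤ : ℕ∞) (fun x : En n => x i + b i)
  fun_prop⟩

lemma Y_apply (b : En n) (i : Fin n) (x : En n) : (Y b i).1 x = x i + b i := rfl

lemma D_Y (b : En n) (i j : Fin n) : D i (Y b j) = if i = j then 1 else 0 := by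
  ext x
  show fderiv ℝ (fun x : En n => x j + b j) x (EuclideanSpace.single i 1) = _
  have h : HasFDerivAt (fun x : En n => x j + b j) (EuclideanSpace.proj j : En n →L[ℝ] ℝ) x :=
    ((EuclideanSpace.proj j : En n →L[ℝ] ℝ).hasFDerivAt).add_const (b j)
  rw [h.fderiv]
  by_cases hij : i = j
  · subst hij; simp
  · have : j ≠ i := fun h => hij h.symm
    simp [hij, this]

lemma D_one (i : Fin n) : D i 1 = 0 := by simp
lemma D_natCast (i : Fin n) (k : ℕ) : D i (k : Sm n) = 0 := by simp
lemma D_ofNat (i : Fin n) (k : ℕ) [k.AtLeastTwo] : D i (no_index (OfNat.ofNat k) : Sm n) = 0 := by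
  exact D_natCast i k

/-- Constants. -/
def Cst (c : ℝ) : Sm n := algebraMap ℝ _ c
lemma D_Cst (i : Fin n) (c : ℝ) : D i (Cst c) = 0 := by simp [Cst]
lemma Cst_apply (c : ℝ) (x : En n) : (Cst c : Sm n).1 x = c := rfl

lemma D_sq (i : Fin n) (f : Sm n) : D i (f ^ 2) = 2 * f * D i f := by
  rw [pow_two, D_mul]; ring

lemma D_pow (i : Fin n) (f : Sm n) (k : ℕ) : D i (f ^ (k+1)) = (k+1 : ℕ) * f ^ k * D i f := by
  rw [Derivation.leibniz_pow]; simp [nsmul_eq_mul, mul_assoc]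

lemma div_fmul (f : Sm n) (X : Fin n → Sm n) :
    ∑ i, D i (f * X i) = ∑ i, D i f * X i + f * ∑ i, D i (X i) := by
  simp only [D_mul, Finset.sum_add_distrib, Finset.mul_sum]

end

section

variable {n : ℕ}

/-- Squared distance. -/
def rho (b : En n) : Sm n := ∑ j, Y b j ^ 2
/-- Radial derivative. -/
def Rad (b : En n) (w : Sm n) : Sm n := ∑ j, Y b j * D j w
/-- Squared gradient. -/
def Gr (w : Sm n) : Sm n := ∑ j, D j w ^ 2
/-- The weight. -/
def phi (b : En n) : Sm n := Ex (-(2 * rho b))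

lemma D_rho (b : En n) (i : Fin n) : D i (rho b) = 2 * Y b i := by
  simp only [rho, map_sum, D_sq, D_Y]
  simp

lemma D_phi (b : En n) (i : Fin n) : D i (phi b) = -(4 * Y b i * phi b) := by
  simp only [phi, D_Ex, map_neg, D_mul, D_ofNat, D_rho]
  ring

lemma div_Y (b : En n) : ∑ i, D i (Y b i) = (n : Sm n) := by
  simp [D_Y]

lemma rho_eq (b : En n) : ∑ i, Y b i * Y b i = rho b := by
  simp [rho, pow_two]

lemma sum_D_phi_mul (b : En n) (X : Fin n → Sm n) :
    ∑ i, D i (phi b) * X i = -(4 * phi b * ∑ i, Y b i * X i) := by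
  simp only [D_phi, Finset.mul_sum, ← Finset.sum_neg_distrib]
  exact Finset.sum_congr rfl fun i _ => by ring

lemma Rad_mul (b : En n) (f g : Sm n) : Rad b (f * g) = Rad b f * g + f * Rad b g := by
  simp only [Rad, D_mul, Finset.mul_sum, Finset.sum_mul, ← Finset.sum_add_distrib]
  exact Finset.sum_congr rfl fun i _ => by ring

lemma Rad_rho (b : En n) : Rad b (rho b) = 2 * rho b := by
  simp only [Rad, D_rho]
  rw [← rho_eq, Finset.mul_sum]
  exact Finset.sum_congr rfl fun i _ => by ring

lemma Rad_phi (b : En n) : Rad b (phi b) = -(4 * rho b * phi b) := by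
  simp only [Rad, D_phi, rho, Finset.mul_sum, Finset.sum_mul, ← Finset.sum_neg_distrib]
  exact Finset.sum_congr rfl fun i _ => by ring

/-- divergence of `f y`. -/
lemma div_fY (b : En n) (f : Sm n) : ∑ i, D i (f * Y b i) = Rad b f + n * f := by
  rw [div_fmul, div_Y, Rad]
  rw [mul_comm f]
  congr 1
  exact Finset.sum_congr rfl fun i _ => by ring

lemma sum_D_Rad (b : En n) (w : Sm n) :
    2 * ∑ i, D i w * D i (Rad b w) = 2 * Gr w + Rad b (Gr w) := by
  have h1 : ∀ i, D i (Rad b w) = D i w + ∑ j, Y b j * D j (D i w) := by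
    intro i
    simp only [Rad, map_sum, D_mul, D_Y, Finset.sum_add_distrib]
    congr 1
    · simp
    · exact Finset.sum_congr rfl fun j _ => by rw [D_comm]
  have h2 : Rad b (Gr w) = 2 * ∑ i, D i w * ∑ j, Y b j * D j (D i w) := by
    simp only [Rad, Gr, map_sum, D_sq, Finset.mul_sum]
    rw [Finset.sum_comm]
    exact Finset.sum_congr rfl fun i _ => Finset.sum_congr rfl fun j _ => by ring
  rw [h2]
  simp only [h1, mul_add, Finset.sum_add_distrib, Gr, Finset.mul_sum]
  congr 1
  exact Finset.sum_congr rfl fun i _ => by ring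

lemma T1 (b : En n) (w : Sm n) : ∑ i, D i ((phi b * Rad b w) * D i w)
    = phi b * Rad b w * L w - 4 * phi b * Rad b w ^ 2 + phi b * ∑ i, D i w * D i (Rad b w) := by
  rw [div_fmul, ← L]
  have : ∑ i : Fin n, D i (phi b * Rad b w) * D i w
      = Rad b w * ∑ i, D i (phi b) * D i w + phi b * ∑ i, D i w * D i (Rad b w) := by
    simp only [D_mul, Finset.mul_sum, ← Finset.sum_add_distrib]
    exact Finset.sum_congr rfl fun i _ => by ring
  rw [this, sum_D_phi_mul, ← Rad]; ring

lemma T2 (b : En n) (w : Sm n) : ∑ i, D i ((phi b * Gr w) * Y b i)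
    = -(4 * rho b * phi b * Gr w) + phi b * Rad b (Gr w) + n * phi b * Gr w := by
  rw [div_fY, Rad_mul, Rad_phi]; ring

lemma T5 (h w : Sm n) : ∑ i, D i ((h * w) * D i w)
    = h * w * L w + h * Gr w + w * ∑ i, D i h * D i w := by
  rw [div_fmul, ← L]
  have : ∑ i : Fin n, D i (h * w) * D i w
      = h * Gr w + w * ∑ i, D i h * D i w := by
    simp only [D_mul, Gr, Finset.mul_sum, ← Finset.sum_add_distrib]
    exact Finset.sum_congr rfl fun i _ => by ring
  rw [this]; ring

lemma T6 (h w : Sm n) : ∑ i, D i (w ^ 2 * D i h)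
    = w ^ 2 * L h + 2 * w * ∑ i, D i h * D i w := by
  rw [div_fmul, ← L]
  have : ∑ i : Fin n, D i (w ^ 2) * D i h = 2 * w * ∑ i, D i h * D i w := by
    simp only [D_sq, Finset.mul_sum]
    exact Finset.sum_congr rfl fun i _ => by ring
  rw [this]; ring

lemma T3 (b : En n) (w : Sm n) : ∑ i : Fin n, D i ((rho b * phi b ^ 3 * w ^ 2) * Y b i)
    = (2 * rho b - 12 * rho b ^ 2 + n * rho b) * phi b ^ 3 * w ^ 2
      + 2 * rho b * phi b ^ 3 * w * Rad b w := by
  rw [div_fY]; simp only [pow_succ, pow_zero, one_mul, Rad_mul, Rad_phi, Rad_rho]; ring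

lemma T4 (b : En n) (w : Sm n) : ∑ i : Fin n, D i ((phi b ^ 2 * w ^ 2) * Y b i)
    = (- 8 * rho b + n) * phi b ^ 2 * w ^ 2 + 2 * phi b ^ 2 * w * Rad b w := by
  rw [div_fY]; simp only [pow_succ, pow_zero, one_mul, Rad_mul, Rad_phi]; ring

/-- `G = Δφ + E`. -/
def gg (b : En n) : Sm n := 16 * rho b - 4 * n + 8

/-- The flux field. The last coefficients are doubled to avoid fractions. -/
def flux (b : En n) (t : Sm n) (w : Sm n) (i : Fin n) : Sm n :=
  16 * t * ((phi b * Rad b w) * D i w) - 8 * t * ((phi b * Gr w) * Y b i)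
    - 2 * t * (((gg b * phi b) * w) * D i w) + t * (w ^ 2 * D i (gg b * phi b))
    + 128 * t ^ 3 * ((rho b * phi b ^ 3 * w ^ 2) * Y b i)
    + 64 * t ^ 2 * ((phi b ^ 2 * w ^ 2) * Y b i)

def SS (b : En n) (t w : Sm n) : Sm n :=
  L w + 16 * t ^ 2 * rho b * phi b ^ 2 * w + 8 * t * phi b * w
def AA (b : En n) (t w : Sm n) : Sm n := t * phi b * (8 * Rad b w - gg b * w)

lemma carleman_id (b : En n) (τ : ℝ) (w : Sm n) :
    2 * (SS b (Cst τ) w * AA b (Cst τ) w) = ∑ i, D i (flux b (Cst τ) w i)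
      + 64 * Cst τ * phi b * Rad b w ^ 2
      + 512 * Cst τ ^ 3 * phi b ^ 3 * rho b * (2 * rho b - 1) * w ^ 2
      + 128 * Cst τ ^ 2 * phi b ^ 2 * (2 * rho b - 1) * w ^ 2
      - Cst τ * w ^ 2 * L (gg b * phi b) := by
  have hc : ∀ (k : Sm n) (X : Fin n → Sm n), (∀ i, D i k = 0) →
      ∑ i, D i (k * X i) = k * ∑ i, D i (X i) := by
    intro k X hk; rw [div_fmul]; simp [hk]
  have e : ∀ i, D i (Cst τ : Sm n) = 0 := fun i => D_Cst i τ
  have hf : ∑ i, D i (flux b (Cst τ) w i) =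
      16 * Cst τ * ∑ i, D i ((phi b * Rad b w) * D i w)
      - 8 * Cst τ * ∑ i, D i ((phi b * Gr w) * Y b i)
      - 2 * Cst τ * ∑ i, D i (((gg b * phi b) * w) * D i w)
      + Cst τ * ∑ i, D i (w ^ 2 * D i (gg b * phi b))
      + 128 * Cst τ ^ 3 * ∑ i, D i ((rho b * phi b ^ 3 * w ^ 2) * Y b i)
      + 64 * Cst τ ^ 2 * ∑ i, D i ((phi b ^ 2 * w ^ 2) * Y b i) := by
    unfold flux
    simp only [map_add, map_sub, Finset.sum_add_distrib, Finset.sum_sub_distrib]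
    have c1 : ∀ i, D i (16 * Cst τ : Sm n) = 0 := fun i => by
      rw [D_mul, D_ofNat, e]; ring
    have c2 : ∀ i, D i (8 * Cst τ : Sm n) = 0 := fun i => by
      rw [D_mul, D_ofNat, e]; ring
    have c3 : ∀ i, D i (2 * Cst τ : Sm n) = 0 := fun i => by
      rw [D_mul, D_ofNat, e]; ring
    have c4 : ∀ i, D i (128 * Cst τ ^ 3 : Sm n) = 0 := fun i => by
      rw [D_mul, D_ofNat, D_pow, e]; ring
    have c5 : ∀ i, D i (64 * Cst τ ^ 2 : Sm n) = 0 := fun i => by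
      rw [D_mul, D_ofNat, D_pow, e]; ring
    rw [hc _ _ c1, hc _ _ c2, hc _ _ c3, hc _ _ e, hc _ _ c4, hc _ _ c5]
  rw [hf, T1, T2, T3, T4, T5, T6]
  have h := sum_D_Rad b w
  set Q := ∑ i, D i w * D i (Rad b w)
  simp only [SS, AA]
  generalize L (gg b * phi b) = LG
  generalize ∑ i, D i (gg b * phi b) * D i w = GW
  unfold gg
  linear_combination (-8 * Cst τ * phi b) * h

/-- conjugation -/
lemma conj_id (b : En n) (τ : ℝ) (v : Sm n) :
    SS b (Cst τ) (Ex (Cst τ * phi b) * v) + AA b (Cst τ) (Ex (Cst τ * phi b) * v)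
      = Ex (Cst τ * phi b) * L v := by
  set e := Ex (Cst τ * phi b) with he
  have hD : ∀ i, D i e = -(4 * Cst τ * phi b * e * Y b i) := by
    intro i; rw [he, D_Ex, D_mul, D_Cst, D_phi]; ring
  have hR : Rad b e = -(4 * Cst τ * phi b * e * rho b) := by
    simp only [Rad, hD, rho, Finset.mul_sum, ← Finset.sum_neg_distrib]
    exact Finset.sum_congr rfl fun i _ => by ring
  have hRC : Rad b (Cst τ : Sm n) = 0 := by simp [Rad, D_Cst]
  have hR4 : Rad b (4 : Sm n) = 0 := by simp only [Rad, D_ofNat]; simp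
  have hLe : L e = -(4 * Cst τ * phi b * e) * (n : Sm n) + 16 * Cst τ * phi b * rho b * e
      + 16 * Cst τ ^ 2 * phi b ^ 2 * rho b * e := by
    unfold L
    simp only [hD, map_neg, Finset.sum_neg_distrib]
    rw [div_fY]
    simp only [Rad_mul, hR, hRC, hR4, Rad_phi]; ring
  have hL : L (e * v) = L e * v + 2 * ∑ i, D i e * D i v + e * L v := by
    simp only [L, D_mul, map_add, Finset.sum_mul, Finset.mul_sum, ← Finset.sum_add_distrib]
    exact Finset.sum_congr rfl fun i _ => by ring
  have hev : ∑ i, D i e * D i v = -(4 * Cst τ * phi b * e) * Rad b v := by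
    simp only [hD, Rad, Finset.mul_sum]
    exact Finset.sum_congr rfl fun i _ => by ring
  simp only [SS, AA, hL, hLe, hev, Rad_mul, hR, gg]
  ring

end

section

/-- open upper half space -/
def HS (m : ℕ) : Set (En (m+1)) := {x | 0 < x (Fin.last m)}

lemma HS_open (m : ℕ) : IsOpen (HS m) := by
  have : Continuous fun x : En (m+1) => x (Fin.last m) := by fun_prop
  exact isOpen_lt continuous_const this

lemma HS_meas (m : ℕ) : MeasurableSet (HS m) := (HS_open m).measurableSet

lemma mem_HS {m : ℕ} {x : En (m+1)} : x ∈ HS m ↔ 0 < x (Fin.last m) := by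
  simp [HS]

def inc {m : ℕ} (y : En m) : En (m+1) := incl (m+1) y

lemma inc_last {m : ℕ} (y : En m) : (inc y) (Fin.last m) = 0 := by
  simp [inc, incl]

lemma inc_castSucc {m : ℕ} (y : En m) (i : Fin m) : (inc y) i.castSucc = y i := by
  simp [inc, incl]

lemma inc_toLp {m : ℕ} (p : Fin m → ℝ) :
    inc (WithLp.toLp 2 p) = WithLp.toLp 2 ((Fin.last m).insertNth (α := fun _ => ℝ) (0:ℝ) p) := by
  ext i
  refine Fin.lastCases ?_ (fun j => ?_) i
  · rw [inc_last]; simp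
  · rw [inc_castSucc]
    simp only
    rw [← Fin.succAbove_last_apply, Fin.insertNth_apply_succAbove]

lemma continuous_inc {m : ℕ} : Continuous (inc : En m → En (m+1)) := by
  unfold inc incl
  refine (PiLp.continuous_toLp 2 _).comp (continuous_pi fun i => ?_)
  by_cases h : (i : ℕ) < m + 1 - 1
  · simp only [h, dif_pos]; fun_prop
  · simp only [h, dif_neg, not_false_eq_true]; exact continuous_const

theorem int_div {m : ℕ} (F : Fin (m+1) → Sm (m+1)) (hF : ∀ i, HasCompactSupport (F i).1) :
    ∫ x in HS m, (∑ i, D i (F i)).1 x = - ∫ y : En m, (F (Fin.last m)).1 (inc y) := by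
  -- radius
  obtain ⟨R, hR0, hR⟩ : ∃ R : ℝ, 0 < R ∧ ∀ i, ∀ x : En (m+1), R ≤ ‖x‖ → (F i).1 x = 0 ∧
      fderiv ℝ (F i).1 x = 0 := by
    have : ∀ i, ∃ R : ℝ, tsupport (F i).1 ⊆ ball 0 R := fun i =>
      (isBounded_iff_subset_ball (0 : En (m+1))).1 (hF i).isBounded
    choose r hr using this
    have hle : ∀ i, r i ≤ 1 + ∑ j, |r j| := by
      intro i
      have := Finset.single_le_sum (f := fun j => |r j|) (fun j _ => abs_nonneg _)
        (Finset.mem_univ i)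
      have h2 := le_abs_self (r i)
      linarith
    refine ⟨1 + ∑ j, |r j|, by positivity, fun i x hx => ?_⟩
    have hx' : x ∉ tsupport (F i).1 := by
      intro h
      have := hr i h
      rw [mem_ball_zero_iff] at this
      linarith [hle i]
    refine ⟨image_eq_zero_of_notMem_tsupport hx', ?_⟩
    exact image_eq_zero_of_notMem_tsupport (fun h => hx' (tsupport_fderiv_subset ℝ h))
  have hR' : ∀ (p : Fin (m+1) → ℝ) (j : Fin (m+1)), R ≤ |p j| → R ≤ ‖(WithLp.toLp 2 p : En (m+1))‖ := by
    intro p j hj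
    exact hj.trans (by simpa using PiLp.norm_apply_le (WithLp.toLp 2 p : En (m+1)) j)
  have hRm : ∀ (p : Fin m → ℝ) (j : Fin m), R ≤ |p j| → R ≤ ‖inc (WithLp.toLp 2 p : En m)‖ := by
    intro p j hj
    have := PiLp.norm_apply_le (inc (WithLp.toLp 2 p : En m)) j.castSucc
    rw [inc_castSucc] at this
    exact hj.trans (by simpa using this)
  set a : Fin (m+1) → ℝ := fun i => if i = Fin.last m then 0 else -R with ha
  set b : Fin (m+1) → ℝ := fun _ => R with hb
  let T : (Fin (m+1) → ℝ) →L[ℝ] En (m+1) := (PiLp.continuousLinearEquiv 2 ℝ (fun _ : Fin (m+1) => ℝ)).symm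
  have hT : ∀ p, T p = WithLp.toLp 2 p := fun p => rfl
  have hle : a ≤ b := by
    intro i; simp only [ha, hb]; split_ifs <;> linarith
  have hcg : Continuous fun p : Fin (m+1) → ℝ => ∑ i, ((fderiv ℝ (F i).1 (T p)).comp T) (Pi.single i 1) := by
    refine continuous_finsetSum _ fun i _ => ?_
    have h1 : Continuous (fderiv ℝ (F i).1) := (Sm_cd (F i)).continuous_fderiv (by simp)
    simp only [ContinuousLinearMap.comp_apply]
    exact (h1.comp T.continuous).clm_apply continuous_const
  have key := integral_divergence_of_hasFDerivAt_off_countable' (E := ℝ) a b hle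
    (fun i p => (F i).1 (T p)) (fun i p => (fderiv ℝ (F i).1 (T p)).comp T) ∅ countable_empty
    (fun i => ((Sm_cont (F i)).comp T.continuous).continuousOn)
    (fun p _ i => ((Sm_da (F i) (T p)).hasFDerivAt).comp p T.hasFDerivAt)
    (hcg.continuousOn.integrableOn_compact isCompact_Icc)
  have hL : ∫ x in HS m, (∑ i, D i (F i)).1 x
      = ∫ p in Icc a b, ∑ i, ((fderiv ℝ (F i).1 (T p)).comp T) (Pi.single i 1) := by
    have h1 : ∀ p : Fin (m+1) → ℝ, (∑ i, D i (F i)).1 (WithLp.toLp 2 p)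
        = ∑ i, ((fderiv ℝ (F i).1 (T p)).comp T) (Pi.single i 1) := by
      intro p
      rw [Sm_sum_apply]
      rfl
    have mp := PiLp.volume_preserving_toLp (Fin (m+1))
    rw [← mp.setIntegral_preimage_emb (MeasurableEquiv.toLp 2 _).measurableEmbedding]
    simp only [h1]
    have hae := Measure.univ_pi_Ioc_ae_eq_Icc (μ := fun _ : Fin (m+1) => (volume : Measure ℝ))
      (f := a) (g := b)
    rw [volume_pi, ← setIntegral_congr_set hae]
    refine (setIntegral_eq_of_subset_of_forall_sdiff_eq_zero ?_ ?_ ?_)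
    · exact (WithLp.measurable_toLp 2 _) (HS_meas m)
    · intro p hp
      have := hp (Fin.last m) (mem_univ _)
      simp only [ha, if_true] at this
      exact mem_HS.2 this.1
    · intro p hp
      obtain ⟨hp1, hp2⟩ := hp
      have hp1' : 0 < p (Fin.last m) := mem_HS.1 hp1
      have : ∃ j, R ≤ |p j| := by
        by_contra hcon
        push Not at hcon
        apply hp2
        intro j _
        have := abs_lt.1 (hcon j)
        by_cases hj : j = Fin.last m
        · subst hj; simp only [ha, hb, if_true]; exact ⟨hp1', this.2.le⟩
        · simp only [ha, hb, hj, if_false]; exact ⟨this.1, this.2.le⟩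
      obtain ⟨j, hj⟩ := this
      refine Finset.sum_eq_zero fun i _ => ?_
      have := (hR i (T p) (hR' p j hj)).2
      rw [this]; simp
  rw [hL, key]
  have hfront : ∀ (i : Fin (m+1)) (c : ℝ), R ≤ |c| → ∀ q : Fin m → ℝ,
      (F i).1 (T (i.insertNth (α := fun _ => ℝ) c q)) = 0 := by
    intro i c hc q
    refine (hR i _ (hR' _ i ?_)).1
    simpa using hc
  rw [Finset.sum_eq_single (Fin.last m)]
  · have hz : ∀ q : Fin m → ℝ, (F (Fin.last m)).1 (T ((Fin.last m).insertNth (α := fun _ => ℝ) (b (Fin.last m)) q)) = 0 :=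
      hfront _ _ (by simp [hb, le_abs_self])
    simp only [hz, integral_zero, zero_sub]
    congr 1
    have ha0 : a (Fin.last m) = 0 := by simp [ha]
    simp only [ha0]
    have mp := PiLp.volume_preserving_toLp (Fin m)
    rw [← mp.integral_comp (MeasurableEquiv.toLp 2 _).measurableEmbedding]
    simp only [inc_toLp, ← hT]
    refine setIntegral_eq_integral_of_forall_compl_eq_zero fun q hq => ?_
    have : ∃ j, R ≤ |q j| := by
      by_contra hcon
      push Not at hcon
      apply hq
      constructor
      · intro j
        have := abs_lt.1 (hcon j)
        simp only [ha, Function.comp, Fin.succAbove_last, Fin.castSucc_ne_last, if_false]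
        exact this.1.le
      · intro j
        have := abs_lt.1 (hcon j)
        exact this.2.le
    obtain ⟨j, hj⟩ := this
    rw [hT, ← inc_toLp]
    exact (hR _ _ (hRm q j hj)).1
  · intro i _ hi
    have h1 : ∀ q : Fin m → ℝ, (F i).1 (T (i.insertNth (α := fun _ => ℝ) (b i) q)) = 0 :=
      hfront _ _ (by simp [hb, le_abs_self])
    have h2 : ∀ q : Fin m → ℝ, (F i).1 (T (i.insertNth (α := fun _ => ℝ) (a i) q)) = 0 :=
      hfront _ _ (by simp [ha, hi, le_abs_self])
    simp only [h1, h2, integral_zero, sub_zero]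
  · simp

end

section

lemma inc_contDiff {m : ℕ} : ContDiff ℝ (⊤ : ℕ∞) (inc : En m → En (m+1)) := by
  rw [contDiff_euclidean]
  intro i
  refine Fin.lastCases ?_ (fun j => ?_) i
  · simp only [inc_last]; exact contDiff_const
  · simp only [inc_castSucc]; fun_prop

/-- restriction to the boundary -/
def res {m : ℕ} (f : Sm (m+1)) : Sm m :=
  ⟨fun y => f.1 (inc y), (Sm_cd f).comp inc_contDiff⟩

lemma res_apply {m : ℕ} (f : Sm (m+1)) (y : En m) : (res f).1 y = f.1 (inc y) := rfl

lemma inc_line {m : ℕ} (y : En m) (i : Fin m) (t : ℝ) :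
    inc (y + t • EuclideanSpace.single i 1) = inc y + t • EuclideanSpace.single i.castSucc 1 := by
  ext k
  refine Fin.lastCases ?_ (fun j => ?_) k
  · rw [inc_last]
    simp [inc_last]
  · rw [inc_castSucc]
    simp [inc_castSucc]

lemma res_D {m : ℕ} (f : Sm (m+1)) (i : Fin m) : res (D i.castSucc f) = D i (res f) := by
  ext y
  show fderiv ℝ f.1 (inc y) (EuclideanSpace.single i.castSucc 1)
    = fderiv ℝ (res f).1 y (EuclideanSpace.single i 1)
  rw [← (Sm_da f (inc y)).lineDeriv_eq_fderiv, ← (Sm_da (res f) y).lineDeriv_eq_fderiv]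
  unfold lineDeriv
  simp only [res_apply, inc_line]

def DL {m : ℕ} (l : List (Fin m)) (α : Fin m → ℕ) (f : Sm m) : Sm m :=
  l.foldr (fun i h => (D i)^[α i] h) f

lemma D_iter_coe {m : ℕ} (i : Fin m) (k : ℕ) (f : Sm m) : ((D i)^[k] f).1 = (pd i)^[k] f.1 := by
  induction k with
  | zero => rfl
  | succ k ih => rw [Function.iterate_succ_apply', Function.iterate_succ_apply', D_coe, ih]

lemma DL_coe {m : ℕ} (α : Fin m → ℕ) (f : Sm m) :
    (DL (List.finRange m) α f).1 = mpd α f.1 := by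
  unfold DL mpd
  induction List.finRange m with
  | nil => rfl
  | cons a l ih =>
    rw [List.foldr_cons, List.foldr_cons, D_iter_coe, ih]

lemma DL_congr {m : ℕ} (l : List (Fin m)) (α β : Fin m → ℕ) (f : Sm m)
    (h : ∀ i ∈ l, α i = β i) : DL l α f = DL l β f := by
  induction l with
  | nil => rfl
  | cons a l ih =>
    simp only [DL, List.foldr_cons] at ih ⊢
    rw [ih fun i hi => h i (List.mem_cons_of_mem _ hi), h a List.mem_cons_self]

lemma D_comm_iter {m : ℕ} (i a : Fin m) (k : ℕ) (f : Sm m) :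
    D i ((D a)^[k] f) = (D a)^[k] (D i f) := by
  have : Function.Commute (D i : Sm m → Sm m) (D a) := fun f => D_comm i a f
  exact (this.iterate_right k) f

lemma D_DL {m : ℕ} (l : List (Fin m)) (hl : l.Nodup) (α : Fin m → ℕ) (f : Sm m) (i : Fin m)
    (hi : i ∈ l) : D i (DL l α f) = DL l (Function.update α i (α i + 1)) f := by
  induction l with
  | nil => simp at hi
  | cons a l ih =>
    rw [List.nodup_cons] at hl
    by_cases hia : i = a
    · subst hia
      have : DL l (Function.update α i (α i + 1)) f = DL l α f := by
        refine DL_congr _ _ _ _ fun j hj => ?_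
        rw [Function.update_of_ne]
        rintro rfl; exact hl.1 hj
      simp only [DL, List.foldr_cons] at this ⊢
      rw [this, Function.update_self, Function.iterate_succ_apply']
    · have hi' : i ∈ l := by
        rcases List.mem_cons.1 hi with h | h
        · exact absurd h hia
        · exact h
      have := ih hl.2 hi'
      simp only [DL, List.foldr_cons] at this ⊢
      rw [← this, Function.update_of_ne (fun h => hia h.symm), D_comm_iter]

/-- iterated derivatives along a word -/
def Dw {m : ℕ} (l : List (Fin m)) (f : Sm m) : Sm m := l.foldr (fun i h => D i h) f

lemma Dw_eq {m : ℕ} (l : List (Fin m)) (f : Sm m) :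
    Dw l f = DL (List.finRange m) (fun i => l.count i) f := by
  induction l with
  | nil =>
    simp only [Dw, List.foldr_nil, List.count_nil, DL, Function.iterate_zero, id]
    induction List.finRange m with
    | nil => rfl
    | cons a l ih => rw [List.foldr_cons]; exact ih
  | cons a l ih =>
    have : Dw (a :: l) f = D a (Dw l f) := rfl
    rw [this, ih, D_DL _ (List.nodup_finRange m) _ _ _ (List.mem_finRange a)]
    congr 1
    funext i
    by_cases h : i = a
    · subst h; simp
    · rw [Function.update_of_ne h, List.count_cons_of_ne (fun h' => h h'.symm)]

/-- The data term, squared. -/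
def Dat {m : ℕ} (u : Sm (m+1)) : ℝ :=
  (∑ j ∈ Finset.range 4,
    Real.sqrt (bdryHnormSq (m+1) (3 - j) 2 ((pd (Fin.last m))^[j] u.1))) ^ 2

/-- boundary L2 norm squared -/
def bq {m : ℕ} (f : Sm (m+1)) : ℝ := ∫ y in ball (0 : En m) 2, (f.1 (inc y)) ^ 2

lemma bdry_nonneg (n m : ℕ) (R : ℝ) (w : En n → ℝ) : 0 ≤ bdryHnormSq n m R w := by
  unfold bdryHnormSq
  refine Finset.sum_nonneg fun α _ => ?_
  split_ifs
  · exact integral_nonneg fun _ => sq_nonneg _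
  · exact le_rfl

lemma bdry_le_Dat {m : ℕ} (u : Sm (m+1)) (j : ℕ) (hj : j < 4) :
    bdryHnormSq (m+1) (3 - j) 2 ((pd (Fin.last m))^[j] u.1) ≤ Dat u := by
  unfold Dat
  rw [← Real.sq_sqrt (bdry_nonneg _ _ _ _)]
  refine pow_le_pow_left₀ (Real.sqrt_nonneg _) ?_ 2
  exact Finset.single_le_sum (f := fun j => Real.sqrt (bdryHnormSq (m+1) (3 - j) 2
    ((pd (Fin.last m))^[j] u.1))) (fun _ _ => Real.sqrt_nonneg _) (Finset.mem_range.2 hj)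

lemma res_Dw {m : ℕ} (l : List (Fin m)) (f : Sm (m+1)) :
    res (Dw (l.map Fin.castSucc) f) = Dw l (res f) := by
  induction l with
  | nil => rfl
  | cons a l ih =>
    have : Dw ((a :: l).map Fin.castSucc) f = D a.castSucc (Dw (l.map Fin.castSucc) f) := rfl
    rw [this, res_D, ih]; rfl

lemma bq_word {m : ℕ} (u : Sm (m+1)) (l : List (Fin m)) (j : ℕ) (h : l.length + j ≤ 3) :
    bq (Dw (l.map Fin.castSucc) ((D (Fin.last m))^[j] u)) ≤ Dat u := by
  refine le_trans ?_ (bdry_le_Dat u j (by omega))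
  have hc : ∀ i, l.count i < 3 - j + 1 := fun i => by
    have := l.count_le_length (a := i); omega
  let α : Fin m → Fin (3 - j + 1) := fun i => ⟨l.count i, hc i⟩
  have hs : ∑ i, (α i : ℕ) ≤ 3 - j := by
    have : ∑ i, (α i : ℕ) = l.length := by
      simp only [α]
      have := Multiset.sum_count_eq_card (s := Finset.univ) (m := (l : Multiset (Fin m)))
        (fun _ _ => Finset.mem_univ _)
      simpa using this
    omega
  have e1 : bq (Dw (l.map Fin.castSucc) ((D (Fin.last m))^[j] u)) =
      ∫ y in ball (0 : En m) 2, (mpd (fun i => (α i : ℕ))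
        (fun z => ((pd (Fin.last m))^[j] u.1) (incl (m+1) z)) y) ^ 2 := by
    unfold bq
    congr 1
    funext y
    rw [← res_apply, res_Dw, Dw_eq, DL_coe]
    have : (res ((D (Fin.last m))^[j] u)).1
        = (fun z => ((pd (Fin.last m))^[j] u.1) (incl (m+1) z)) := by
      funext z
      rw [res_apply, D_iter_coe]; rfl
    rw [this]
    rfl
  rw [e1]
  unfold bdryHnormSq
  have := Finset.single_le_sum (f := fun α : Fin (m + 1 - 1) → Fin (3 - j + 1) =>
    if (∑ i, (α i : ℕ)) ≤ 3 - j then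
      ∫ y in ball (0 : EuclideanSpace ℝ (Fin (m + 1 - 1))) 2,
        (mpd (fun i => (α i : ℕ)) (fun z => ((pd (Fin.last m))^[j] u.1) (incl (m+1) z)) y) ^ 2
    else 0) (fun α _ => by
      split_ifs
      · exact integral_nonneg fun _ => sq_nonneg _
      · exact le_rfl) (Finset.mem_univ α)
  refine le_trans (le_of_eq ?_) this
  exact (if_pos hs).symm

lemma last_or {m : ℕ} (i : Fin (m+1)) : i = Fin.last m ∨ ∃ j : Fin m, i = j.castSucc := by
  refine Fin.lastCases ?_ (fun j => ?_) i
  · exact Or.inl rfl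
  · exact Or.inr ⟨j, rfl⟩

lemma bq0 {m : ℕ} (u : Sm (m+1)) : bq u ≤ Dat u := bq_word u [] 0 (by simp)

lemma bq1 {m : ℕ} (u : Sm (m+1)) (i : Fin (m+1)) : bq (D i u) ≤ Dat u := by
  rcases last_or i with rfl | ⟨j, rfl⟩
  · exact bq_word u [] 1 (by simp)
  · exact bq_word u [j] 0 (by simp)

lemma bq2 {m : ℕ} (u : Sm (m+1)) (i : Fin (m+1)) : bq (D i (D i u)) ≤ Dat u := by
  rcases last_or i with rfl | ⟨j, rfl⟩
  · exact bq_word u [] 2 (by simp)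
  · exact bq_word u [j, j] 0 (by simp)

lemma bq3 {m : ℕ} (u : Sm (m+1)) (k i : Fin (m+1)) : bq (D k (D i (D i u))) ≤ Dat u := by
  rcases last_or i with rfl | ⟨j, rfl⟩
  · rcases last_or k with rfl | ⟨l, rfl⟩
    · exact bq_word u [] 3 (by simp)
    · exact bq_word u [l] 2 (by simp)
  · rcases last_or k with rfl | ⟨l, rfl⟩
    · rw [D_comm _ j.castSucc, D_comm _ j.castSucc]
      exact bq_word u [j, j] 1 (by simp)
    · exact bq_word u [l, j, j] 0 (by simp)

lemma bq_int {m : ℕ} (f : Sm (m+1)) :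
    IntegrableOn (fun y => (f.1 (inc y)) ^ 2) (ball (0 : En m) 2) := by
  have : Continuous fun y : En m => (f.1 (inc y)) ^ 2 :=
    ((Sm_cont f).comp continuous_inc).pow 2
  exact (this.continuousOn.integrableOn_compact (isCompact_closedBall 0 2)).mono_set
    ball_subset_closedBall

lemma bq_sum {m k : ℕ} (f : Fin k → Sm (m+1)) (B : ℝ) (h : ∀ i, bq (f i) ≤ B) :
    bq (∑ i, f i) ≤ (k : ℝ) ^ 2 * B := by
  have h1 : bq (∑ i, f i) ≤ ∫ y in ball (0 : En m) 2, (k : ℝ) * ∑ i, ((f i).1 (inc y)) ^ 2 := by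
    unfold bq
    refine setIntegral_mono (bq_int _) ?_ fun y => ?_
    · exact (integrable_finsetSum _ fun i _ => bq_int (f i)).const_mul _
    · simp only [Sm_sum_apply]
      have := sq_sum_le_card_mul_sum_sq (s := Finset.univ) (f := fun i => (f i).1 (inc y))
      simpa using this
  refine h1.trans ?_
  rw [integral_const_mul, integral_finsetSum _ fun i _ => bq_int (f i)]
  have h2 : ∑ i, ∫ y in ball (0 : En m) 2, ((f i).1 (inc y)) ^ 2 ≤ ∑ i : Fin k, B :=
    Finset.sum_le_sum fun i _ => h i
  simp only [Finset.sum_const, Finset.card_univ, Fintype.card_fin, nsmul_eq_mul] at h2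
  calc (k : ℝ) * _ ≤ k * (k * B) := by gcongr
    _ = _ := by ring

lemma bqL {m : ℕ} (u : Sm (m+1)) : bq (L u) ≤ ((m+1 : ℕ) : ℝ) ^ 2 * Dat u :=
  bq_sum _ _ fun i => bq2 u i

lemma bqDL {m : ℕ} (u : Sm (m+1)) (k : Fin (m+1)) :
    bq (D k (L u)) ≤ ((m+1 : ℕ) : ℝ) ^ 2 * Dat u := by
  unfold L
  rw [map_sum]
  exact bq_sum _ _ fun i => bq3 u k i

end

section

variable {m : ℕ}

/-- the shift vector -/
def b0 (m : ℕ) : En (m+1) := EuclideanSpace.single (Fin.last m) 1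

lemma rho_apply {n : ℕ} (b x : En n) : (rho b).1 x = ∑ j, (x j + b j) ^ 2 := by
  unfold rho; rw [Sm_sum_apply]; rfl

lemma rho_norm {n : ℕ} (b x : En n) : (rho b).1 x = ‖x + b‖ ^ 2 := by
  rw [rho_apply, EuclideanSpace.norm_sq_eq]
  simp

lemma rho_b0 (x : En (m+1)) : (rho (b0 m)).1 x = ‖x‖ ^ 2 + 2 * x (Fin.last m) + 1 := by
  rw [rho_norm, norm_add_sq_real]
  simp [b0, EuclideanSpace.inner_single_right]

lemma rho_ge {x : En (m+1)} (hx : 0 ≤ x (Fin.last m)) : 1 ≤ (rho (b0 m)).1 x := by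
  rw [rho_b0]; nlinarith [sq_nonneg ‖x‖]

lemma norm_inc (y : En m) : ‖inc y‖ = ‖y‖ := by
  have : ‖inc y‖ ^ 2 = ‖y‖ ^ 2 := by
    rw [EuclideanSpace.norm_sq_eq, EuclideanSpace.norm_sq_eq, Fin.sum_univ_castSucc]
    simp only [inc_last, inc_castSucc]; simp
  exact (sq_eq_sq₀ (norm_nonneg _) (norm_nonneg _)).1 this

lemma rho_lt_of_halfBall {x : En (m+1)} (hx : ‖x‖ < 1) :
    (rho (b0 m)).1 x < 4 := by
  rw [rho_b0]
  have h1 := PiLp.norm_apply_le x (Fin.last m)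
  have h2 := le_abs_self (x (Fin.last m))
  rw [Real.norm_eq_abs] at h1
  nlinarith [norm_nonneg x]

lemma norm_lt_of_rho {x : En (m+1)} (hx : 0 ≤ x (Fin.last m)) (h : (rho (b0 m)).1 x ≤ 19/4) :
    ‖x‖ < 2 := by
  rw [rho_b0] at h
  by_contra hc
  push Not at hc
  nlinarith

/-- supported in a fixed ball -/
def Van (f : Sm (m+1)) : Prop := ∀ x, 19/4 < (rho (b0 m)).1 x → f.1 x = 0

lemma Van.mul_right {f : Sm (m+1)} (hf : Van f) (g : Sm (m+1)) : Van (f * g) := fun x hx => by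
  rw [Sm_mul, hf x hx, zero_mul]
lemma Van.mul_left {f : Sm (m+1)} (hf : Van f) (g : Sm (m+1)) : Van (g * f) := fun x hx => by
  rw [Sm_mul, hf x hx, mul_zero]
lemma Van.add {f g : Sm (m+1)} (hf : Van f) (hg : Van g) : Van (f + g) := fun x hx => by
  rw [Sm_add, hf x hx, hg x hx, zero_add]
lemma Van.sub {f g : Sm (m+1)} (hf : Van f) (hg : Van g) : Van (f - g) := fun x hx => by
  rw [Sm_sub, hf x hx, hg x hx, zero_sub, neg_zero]
lemma Van.neg {f : Sm (m+1)} (hf : Van f) : Van (-f) := fun x hx => by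
  rw [Sm_neg, hf x hx, neg_zero]
lemma Van.sum {ι : Type*} {s : Finset ι} {f : ι → Sm (m+1)} (hf : ∀ i, Van (f i)) :
    Van (∑ i ∈ s, f i) := fun x hx => by
  rw [Sm_sum_apply]; exact Finset.sum_eq_zero fun i _ => hf i x hx
lemma Van.pow {f : Sm (m+1)} (hf : Van f) (k : ℕ) : Van (f ^ (k+1)) := by
  rw [pow_succ]; exact hf.mul_left _

/-- derivative on an open set where the function is constant -/
lemma D_zero_of_open {n : ℕ} {f : Sm n} {U : Set (En n)} (hU : IsOpen U) {c : ℝ}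
    (h : ∀ x ∈ U, f.1 x = c) (i : Fin n) : ∀ x ∈ U, (D i f).1 x = 0 := by
  intro x hx
  show fderiv ℝ f.1 x _ = 0
  have : f.1 =ᶠ[nhds x] fun _ => c := by
    filter_upwards [hU.mem_nhds hx] with z hz using h z hz
  rw [this.fderiv_eq]; simp

lemma Van.D {f : Sm (m+1)} (hf : Van f) (i : Fin (m+1)) : Van (D i f) := by
  intro x hx
  exact D_zero_of_open (isOpen_lt continuous_const (Sm_cont (rho (b0 m))))
    (c := 0) (fun z hz => hf z hz) i x hx

lemma Van.L {f : Sm (m+1)} (hf : Van f) : Van (L f) := Van.sum fun i => (hf.D i).D i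

lemma Van.Gr {f : Sm (m+1)} (hf : Van f) : Van (Gr f) := Van.sum fun i => (hf.D i).pow 1

lemma rho_closed_compact (r : ℝ) : IsCompact {x : En (m+1) | (rho (b0 m)).1 x ≤ r} := by
  refine Metric.isCompact_of_isClosed_isBounded
    (isClosed_le (Sm_cont (rho (b0 m))) continuous_const) ?_
  refine (isBounded_iff_forall_norm_le).2 ⟨‖b0 m‖ + Real.sqrt r, fun x hx => ?_⟩
  have hx' : (rho (b0 m)).1 x ≤ r := hx
  rw [rho_norm] at hx'
  have h1 : ‖x + b0 m‖ ≤ Real.sqrt r := Real.le_sqrt_of_sq_le hx'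
  have h2 : ‖x‖ ≤ ‖x + b0 m‖ + ‖b0 m‖ := by
    have := norm_sub_le (x + b0 m) (b0 m)
    simpa using this
  linarith

lemma Van.cs {f : Sm (m+1)} (hf : Van f) : HasCompactSupport f.1 := by
  refine HasCompactSupport.of_support_subset_isCompact (rho_closed_compact (19/4)) ?_
  intro x hx
  by_contra h
  exact hx (hf x (lt_of_not_ge h))

lemma Van.int {f : Sm (m+1)} (hf : Van f) : IntegrableOn f.1 (HS m) :=
  ((Sm_cont f).integrable_of_hasCompactSupport hf.cs).integrableOn

lemma Van.inc_zero {f : Sm (m+1)} (hf : Van f) {y : En m} (hy : y ∉ ball (0 : En m) 2) :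
    f.1 (inc y) = 0 := by
  refine hf _ ?_
  rw [mem_ball_zero_iff, not_lt] at hy
  rw [rho_b0, inc_last, norm_inc]
  nlinarith

lemma Van.bint {f : Sm (m+1)} (hf : Van f) : Integrable (fun y : En m => f.1 (inc y)) := by
  refine Continuous.integrable_of_hasCompactSupport ((Sm_cont f).comp continuous_inc) ?_
  refine HasCompactSupport.of_support_subset_isCompact (isCompact_closedBall (0 : En m) 2) ?_
  intro y hy
  by_contra h
  exact hy (hf.inc_zero fun h' => h (ball_subset_closedBall h'))

/-- cutoff -/
def cut (m : ℕ) (a b : ℝ) : Sm (m+1) :=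
  ⟨fun x => Real.smoothTransition ((b - (rho (b0 m)).1 x) / (b - a)), by
    show ContDiff ℝ (⊤ : ℕ∞) (fun x => Real.smoothTransition ((b - (rho (b0 m)).1 x) / (b - a)))
    exact Real.smoothTransition.contDiff.comp
      ((contDiff_const.sub (Sm_cd (rho (b0 m)))).div_const _)⟩

lemma cut_nonneg (a b : ℝ) (x : En (m+1)) : 0 ≤ (cut m a b).1 x :=
  Real.smoothTransition.nonneg _
lemma cut_le_one (a b : ℝ) (x : En (m+1)) : (cut m a b).1 x ≤ 1 :=
  Real.smoothTransition.le_one _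
lemma cut_one {a b : ℝ} (hab : a < b) {x : En (m+1)} (h : (rho (b0 m)).1 x ≤ a) :
    (cut m a b).1 x = 1 := by
  refine Real.smoothTransition.one_of_one_le ?_
  rw [le_div_iff₀ (by linarith)]; linarith
lemma cut_zero {a b : ℝ} (hab : a < b) {x : En (m+1)} (h : b ≤ (rho (b0 m)).1 x) :
    (cut m a b).1 x = 0 := by
  refine Real.smoothTransition.zero_of_nonpos ?_
  exact div_nonpos_of_nonpos_of_nonneg (by linarith) (by linarith)
lemma cut_van {a b : ℝ} (hab : a < b) (hb : b ≤ 19/4) : Van (cut m a b) :=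
  fun _ hx => cut_zero hab (by linarith)

lemma cut_D_zero {a b : ℝ} (hab : a < b) {x : En (m+1)}
    (h : (rho (b0 m)).1 x < a ∨ b < (rho (b0 m)).1 x) (i : Fin (m+1)) :
    (D i (cut m a b)).1 x = 0 := by
  rcases h with h | h
  · exact D_zero_of_open (isOpen_lt (Sm_cont (rho (b0 m))) continuous_const)
      (c := 1) (fun z hz => cut_one hab (le_of_lt hz)) i x h
  · exact D_zero_of_open (isOpen_lt continuous_const (Sm_cont (rho (b0 m))))
      (c := 0) (fun z hz => cut_zero hab (le_of_lt hz)) i x h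

lemma cut_DD_zero {a b : ℝ} (hab : a < b) {x : En (m+1)}
    (h : (rho (b0 m)).1 x < a ∨ b < (rho (b0 m)).1 x) (i : Fin (m+1)) :
    (D i (D i (cut m a b))).1 x = 0 := by
  rcases h with h | h
  · exact D_zero_of_open (isOpen_lt (Sm_cont (rho (b0 m))) continuous_const)
      (c := 0) (fun z hz => cut_D_zero hab (Or.inl hz) i) i x h
  · exact D_zero_of_open (isOpen_lt continuous_const (Sm_cont (rho (b0 m))))
      (c := 0) (fun z hz => cut_D_zero hab (Or.inr hz) i) i x h

lemma Van.bdd {f : Sm (m+1)} (hf : Van f) : ∃ K : ℝ, 0 ≤ K ∧ ∀ x, |f.1 x| ≤ K := by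
  obtain ⟨K, hK⟩ := hf.cs.exists_bound_of_continuous (Sm_cont f)
  refine ⟨K, (norm_nonneg _).trans (hK 0), hK⟩

lemma Gr_apply {n : ℕ} (f : Sm n) (x : En n) : (Gr f).1 x = ∑ i, ((D i f).1 x) ^ 2 := by
  unfold Gr; rw [Sm_sum_apply]; rfl
lemma Gr_nonneg {n : ℕ} (f : Sm n) (x : En n) : 0 ≤ (Gr f).1 x := by
  rw [Gr_apply]; exact Finset.sum_nonneg fun _ _ => sq_nonneg _
lemma Lap_apply {n : ℕ} (f : Sm n) (x : En n) : (L f).1 x = ∑ i, (D i (D i f)).1 x := by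
  unfold L; rw [Sm_sum_apply]

lemma phi_apply {n : ℕ} (b x : En n) : (phi b).1 x = Real.exp (-(2 * (rho b).1 x)) := rfl
lemma phi_pos {n : ℕ} (b x : En n) : 0 < (phi b).1 x := Real.exp_pos _
lemma phi_le_one {n : ℕ} (b x : En n) : (phi b).1 x ≤ 1 := by
  rw [phi_apply, Real.exp_le_one_iff]
  have : 0 ≤ (rho b).1 x := by rw [rho_norm]; positivity
  linarith

end

section

variable {m : ℕ}

lemma Sm_natCast {n : ℕ} (k : ℕ) (x : En n) : (k : Sm n).1 x = k := by
  simp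
lemma Sm_ofNat {n : ℕ} (k : ℕ) [k.AtLeastTwo] (x : En n) :
    (no_index (OfNat.ofNat k) : Sm n).1 x = OfNat.ofNat k := Sm_natCast k x
lemma Sm_one {n : ℕ} (x : En n) : (1 : Sm n).1 x = 1 := rfl
lemma Sm_zero {n : ℕ} (x : En n) : (0 : Sm n).1 x = 0 := rfl

lemma bddOn (f : Sm (m+1)) : ∃ K : ℝ, 0 ≤ K ∧ ∀ x, (rho (b0 m)).1 x ≤ 19/4 → |f.1 x| ≤ K := by
  obtain ⟨K, hK⟩ := (rho_closed_compact (m := m) (19/4)).exists_bound_of_continuousOn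
    (Sm_cont f).continuousOn
  exact ⟨max K 0, le_max_right _ _, fun x hx => (hK x hx).trans (le_max_left _ _)⟩

lemma Rad_sq_le {n : ℕ} (b : En n) (w : Sm n) (x : En n) :
    ((Rad b w).1 x) ^ 2 ≤ (rho b).1 x * (Gr w).1 x := by
  rw [Gr_apply, rho_apply]
  unfold Rad
  rw [Sm_sum_apply]
  exact Finset.sum_mul_sq_le_sq_mul_sq _ _ _

lemma D_sq_le_Gr {n : ℕ} (w : Sm n) (i : Fin n) (x : En n) : ((D i w).1 x) ^ 2 ≤ (Gr w).1 x := by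
  rw [Gr_apply]
  exact Finset.single_le_sum (f := fun i => ((D i w).1 x) ^ 2) (fun _ _ => sq_nonneg _)
    (Finset.mem_univ i)

/-- The exponential weight. -/
def ew (m : ℕ) (τ : ℝ) : Sm (m+1) := Ex (Cst τ * phi (b0 m))

lemma carl_real {p τ K q r S A F z R l : ℝ} (hp0 : 0 < p) (hτ1 : 1 ≤ τ)
    (hτK : K ≤ 256 * p ^ 3 * τ ^ 2) (hSA : 4 * (S * A) ≤ (S + A) ^ 2) (hr1 : 1 ≤ r)
    (hqp : p ≤ q)
    (e1 : 2 * (S * A) = F + 64 * τ * q * R ^ 2 + 512 * τ ^ 3 * q ^ 3 * r * (2 * r - 1) * z ^ 2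
      + 128 * τ ^ 2 * q ^ 2 * (2 * r - 1) * z ^ 2 - τ * z ^ 2 * l) (hLK : l ≤ K) :
    512 * p ^ 3 * τ ^ 3 * z ^ 2 + 2 * F ≤ (S + A) ^ 2 := by
  have hq0 : 0 < q := lt_of_lt_of_le hp0 hqp
  have h1 : 0 ≤ 64 * τ * q * R ^ 2 := by positivity
  have h3 : 0 ≤ 128 * τ ^ 2 * q ^ 2 * (2 * r - 1) * z ^ 2 := by
    have : 0 ≤ 2 * r - 1 := by linarith
    positivity
  have h2 : 512 * τ ^ 3 * p ^ 3 * z ^ 2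
      ≤ 512 * τ ^ 3 * q ^ 3 * r * (2 * r - 1) * z ^ 2 := by
    have a1 : p ^ 3 ≤ q ^ 3 := by gcongr
    have a2 : 1 ≤ r * (2 * r - 1) := by nlinarith
    have a3 : p ^ 3 ≤ q ^ 3 * (r * (2 * r - 1)) := by
      have : 0 < q ^ 3 := by positivity
      nlinarith
    have a4 : 0 ≤ 512 * τ ^ 3 * z ^ 2 := by positivity
    linarith [mul_le_mul_of_nonneg_left a3 a4]
  have h4 : τ * z ^ 2 * l ≤ 256 * p ^ 3 * τ ^ 3 * z ^ 2 := by
    have a1 : 0 ≤ τ * z ^ 2 := by positivity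
    have := mul_le_mul_of_nonneg_left (hLK.trans hτK) a1
    linarith
  linarith

lemma carl_pt : ∃ c > 0, ∃ τ0 : ℝ, 1 ≤ τ0 ∧ ∀ τ ≥ τ0, ∀ v : Sm (m+1), Van v → ∀ x : En (m+1),
    0 ≤ x (Fin.last m) →
    c * τ ^ 3 * ((ew m τ * v) ^ 2).1 x
      + 2 * (∑ i, D i (flux (b0 m) (Cst τ) (ew m τ * v) i)).1 x ≤ ((ew m τ * L v) ^ 2).1 x := by
  obtain ⟨K, hK0, hK⟩ := bddOn (L (gg (b0 m) * phi (b0 m)))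
  set p : ℝ := Real.exp (-(19/2)) with hp
  have hp0 : 0 < p := Real.exp_pos _
  refine ⟨512 * p ^ 3, by positivity, 1 + K / (256 * p ^ 3), ?_, ?_⟩
  · have : 0 ≤ K / (256 * p ^ 3) := by positivity
    linarith
  intro τ hτ v hv x hx
  have hKp : 0 ≤ K / (256 * p ^ 3) := by positivity
  have hτ1 : 1 ≤ τ := by linarith
  have hτK : K ≤ 256 * p ^ 3 * τ ^ 2 := by
    have h1 : K / (256 * p ^ 3) ≤ τ := by linarith
    rw [div_le_iff₀ (by positivity)] at h1
    have : 256 * p ^ 3 * τ ≤ 256 * p ^ 3 * τ ^ 2 := by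
      apply mul_le_mul_of_nonneg_left _ (by positivity)
      nlinarith
    linarith
  set w := ew m τ * v with hw
  have e1 := congrArg (fun f : Sm (m+1) => f.1 x) (carleman_id (b0 m) τ w)
  have e2 := congrArg (fun f : Sm (m+1) => f.1 x) (conj_id (b0 m) τ v)
  have hw' : Ex (Cst τ * phi (b0 m)) * v = w := rfl
  rw [hw'] at e2
  simp only [Sm_mul, Sm_add, Sm_sub, Sm_pow, Sm_ofNat, Sm_one, Cst_apply] at e1 e2 ⊢
  have e3 : (ew m τ).1 x * (L v).1 x = (SS (b0 m) (Cst τ) w).1 x + (AA (b0 m) (Cst τ) w).1 x :=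
    e2.symm
  rw [e3]
  set S := (SS (b0 m) (Cst τ) w).1 x
  set A := (AA (b0 m) (Cst τ) w).1 x
  set F := (∑ i, D i (flux (b0 m) (Cst τ) w i)).1 x
  set q := (phi (b0 m)).1 x with hq
  set r := (rho (b0 m)).1 x with hr
  have hr1 : 1 ≤ r := rho_ge hx
  have hq0 : 0 < q := phi_pos _ _
  have hSA : 4 * (S * A) ≤ (S + A) ^ 2 := by nlinarith [sq_nonneg (S - A)]
  rcases lt_or_ge (19/4) r with h | h
  · have hw0 : w.1 x = 0 := hv.mul_left _ x h
    rw [hw0]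
    rw [hw0] at e1
    have : 0 ≤ 64 * τ * q * (Rad (b0 m) w).1 x ^ 2 := by positivity
    clear_value S A F q r
    linarith
  · have hqp : p ≤ q := by
      rw [hp, hq, phi_apply]; apply Real.exp_le_exp.2; rw [← hr]; linarith
    have hLK := (abs_le.1 (hK x h)).2
    exact carl_real hp0 hτ1 hτK hSA hr1 hqp e1 hLK

lemma flux_van {w : Sm (m+1)} (hw : Van w) (t : Sm (m+1)) (i : Fin (m+1)) :
    Van (flux (b0 m) t w i) := by
  have hR : Van (Rad (b0 m) w) := Van.sum fun j => (hw.D j).mul_left _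
  unfold flux
  refine Van.add (Van.add (Van.add (Van.sub (Van.sub ?_ ?_) ?_) ?_) ?_) ?_
  · exact Van.mul_left (Van.mul_left (hw.D i) _) _
  · exact Van.mul_left (Van.mul_right (Van.mul_left hw.Gr _) _) _
  · exact Van.mul_left (Van.mul_left (hw.D i) _) _
  · exact Van.mul_left (Van.mul_right (hw.pow 1) _) _
  · exact Van.mul_left (Van.mul_right (Van.mul_left (hw.pow 1) _) _) _
  · exact Van.mul_left (Van.mul_right (Van.mul_left (hw.pow 1) _) _) _

lemma flux_real {τ q r R d g k z G G0 H : ℝ} (hτ : 1 ≤ τ) (hG0 : 0 ≤ G0) (hH0 : 0 ≤ H)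
    (hg : |g| ≤ G0) (hh : |k| ≤ H) (hR : R ^ 2 ≤ r * G) (hd : d ^ 2 ≤ G) (hr : 1 ≤ r)
    (h : r ≤ 19/4) (hq0 : 0 < q) (hq1 : q ≤ 1) (hGn : 0 ≤ G) :
    |16 * τ * (q * R * d) - 8 * τ * (q * G * 1) - 2 * τ * (g * q * z * d) + τ * (z ^ 2 * k)
      + 128 * τ ^ 3 * (r * q ^ 3 * z ^ 2 * 1) + 64 * τ ^ 2 * (q ^ 2 * z ^ 2 * 1)|
      ≤ (46 + 8 + G0 + H + 608 + 64) * τ ^ 3 * (z ^ 2 + G) := by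
  have hτ3 : τ ≤ τ ^ 3 := by nlinarith [sq_nonneg τ, mul_pos (by linarith : 0 < τ) (by linarith : 0 < τ)]
  have hτ23 : τ ^ 2 ≤ τ ^ 3 := by nlinarith [sq_nonneg τ]
  have hz : 0 ≤ z ^ 2 := sq_nonneg _
  have b1 : |16 * τ * (q * R * d)| ≤ 46 * τ ^ 3 * G := by
    have : |R * d| ≤ 23/8 * G := by
      have : R ^ 2 ≤ 19/4 * G := hR.trans (by gcongr)
      rw [abs_le]; constructor <;> nlinarith [sq_nonneg (R + d), sq_nonneg (R - d)]
    calc |16 * τ * (q * R * d)| = 16 * τ * (q * |R * d|) := by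
          rw [abs_mul, abs_of_nonneg (by positivity : 0 ≤ 16 * τ), mul_assoc q, abs_mul q,
            abs_of_pos hq0]
      _ ≤ 16 * τ ^ 3 * (1 * (23/8 * G)) := by gcongr
      _ = _ := by ring
  have b2 : |8 * τ * (q * G * 1)| ≤ 8 * τ ^ 3 * G := by
    rw [abs_of_nonneg (by positivity)]
    calc 8 * τ * (q * G * 1) ≤ 8 * τ ^ 3 * (1 * G * 1) := by gcongr
      _ = _ := by ring
  have b3 : |2 * τ * (g * q * z * d)| ≤ G0 * τ ^ 3 * (z ^ 2 + G) := by
    have h1 : |z * d| ≤ (z ^ 2 + G) / 2 := by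
      rw [abs_le]; constructor <;> nlinarith [sq_nonneg (z + d), sq_nonneg (z - d)]
    calc |2 * τ * (g * q * z * d)| = 2 * τ * (|g| * q * |z * d|) := by
          rw [abs_mul, abs_of_nonneg (by positivity : 0 ≤ 2 * τ), mul_assoc (g * q), abs_mul (g*q),
            abs_mul g, abs_of_pos hq0]
      _ ≤ 2 * τ ^ 3 * (G0 * 1 * ((z ^ 2 + G) / 2)) := by gcongr
      _ = _ := by ring
  have b4 : |τ * (z ^ 2 * k)| ≤ H * τ ^ 3 * z ^ 2 := by
    rw [abs_mul, abs_mul, abs_of_nonneg hz, abs_of_nonneg (by linarith : 0 ≤ τ)]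
    calc τ * (z ^ 2 * |k|) ≤ τ ^ 3 * (z ^ 2 * H) := by gcongr
      _ = _ := by ring
  have b5 : |128 * τ ^ 3 * (r * q ^ 3 * z ^ 2 * 1)| ≤ 608 * τ ^ 3 * z ^ 2 := by
    rw [abs_of_nonneg (by positivity)]
    calc 128 * τ ^ 3 * (r * q ^ 3 * z ^ 2 * 1) ≤ 128 * τ ^ 3 * ((19/4) * 1 ^ 3 * z ^ 2 * 1) := by
          gcongr
      _ = _ := by ring
  have b6 : |64 * τ ^ 2 * (q ^ 2 * z ^ 2 * 1)| ≤ 64 * τ ^ 3 * z ^ 2 := by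
    rw [abs_of_nonneg (by positivity)]
    calc 64 * τ ^ 2 * (q ^ 2 * z ^ 2 * 1) ≤ 64 * τ ^ 3 * (1 ^ 2 * z ^ 2 * 1) := by
          gcongr
      _ = _ := by ring
  have hT : 0 ≤ τ ^ 3 * G := by positivity
  have hTz : 0 ≤ τ ^ 3 * z ^ 2 := by positivity
  have hHG : 0 ≤ H * (τ ^ 3 * G) := by positivity
  rw [abs_le] at b1 b2 b3 b4 b5 b6 ⊢
  obtain ⟨b1, c1⟩ := b1; obtain ⟨b2, c2⟩ := b2; obtain ⟨b3, c3⟩ := b3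
  obtain ⟨b4, c4⟩ := b4; obtain ⟨b5, c5⟩ := b5; obtain ⟨b6, c6⟩ := b6
  constructor <;> linarith

lemma flux_bd : ∃ C : ℝ, 0 ≤ C ∧ ∀ τ : ℝ, 1 ≤ τ → ∀ w : Sm (m+1), Van w → ∀ y : En m,
    |(flux (b0 m) (Cst τ) w (Fin.last m)).1 (inc y)|
      ≤ C * τ ^ 3 * (w.1 (inc y) ^ 2 + (Gr w).1 (inc y)) := by
  obtain ⟨G0, hG0, hG⟩ := bddOn (gg (b0 m))
  obtain ⟨H, hH0, hH⟩ := bddOn (D (Fin.last m) (gg (b0 m) * phi (b0 m)))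
  refine ⟨46 + 8 + G0 + H + 608 + 64, by positivity, ?_⟩
  intro τ hτ w hw y
  set x := inc y
  have hx : x (Fin.last m) = 0 := inc_last y
  rcases lt_or_ge (19/4) ((rho (b0 m)).1 x) with h | h
  · rw [flux_van hw _ _ x h, abs_zero]
    have := Gr_nonneg w x
    positivity
  have hY : (Y (b0 m) (Fin.last m)).1 x = 1 := by
    rw [Y_apply, hx]; simp [b0]
  have hg := hG x h
  have hh := hH x h
  have hR := Rad_sq_le (b0 m) w x
  have hd := D_sq_le_Gr w (Fin.last m) x
  have hr := rho_ge hx.ge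
  have hq0 := phi_pos (b0 m) x
  have hq1 := phi_le_one (b0 m) x
  unfold flux
  simp only [Sm_mul, Sm_add, Sm_sub, Sm_pow, Sm_ofNat, Cst_apply, hY]
  have hGn := Gr_nonneg w x
  exact flux_real hτ hG0 hH0 hg hh hR hd hr h hq0 hq1 hGn

lemma ew_pos (τ : ℝ) (x : En (m+1)) : 0 < (ew m τ).1 x := Real.exp_pos _
lemma ew_apply (τ : ℝ) (x : En (m+1)) : (ew m τ).1 x = Real.exp (τ * (phi (b0 m)).1 x) := rfl

lemma bd_w (τ : ℝ) (hτ : 1 ≤ τ) (v : Sm (m+1)) (hv : Van v) (x : En (m+1)) :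
    (ew m τ * v).1 x ^ 2 + (Gr (ew m τ * v)).1 x
      ≤ 153 * τ ^ 2 * Real.exp (2 * τ) * (v.1 x ^ 2 + (Gr v).1 x) := by
  have hGv := Gr_nonneg v x
  rcases lt_or_ge (19/4) ((rho (b0 m)).1 x) with h | h
  · rw [(hv.mul_left _).Gr x h, hv.mul_left _ x h]
    have : 0 ≤ 153 * τ ^ 2 * Real.exp (2 * τ) * (v.1 x ^ 2 + (Gr v).1 x) := by positivity
    simpa using this
  have he := ew_pos τ x
  have hq0 := phi_pos (b0 m) x
  have hq1 := phi_le_one (b0 m) x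
  have he2 : (ew m τ).1 x ^ 2 ≤ Real.exp (2 * τ) := by
    rw [ew_apply, ← Real.exp_nat_mul]
    apply Real.exp_le_exp.2
    push_cast; nlinarith
  have hr0 : 0 ≤ (rho (b0 m)).1 x := by rw [rho_norm]; positivity
  have hG : (Gr (ew m τ * v)).1 x ≤ (ew m τ).1 x ^ 2 * (2 * (Gr v).1 x
      + 32 * τ ^ 2 * (phi (b0 m)).1 x ^ 2 * (rho (b0 m)).1 x * v.1 x ^ 2) := by
    rw [Gr_apply, Gr_apply, rho_apply]
    have : ∀ i : Fin (m+1), (D i (ew m τ * v)).1 x ^ 2 ≤ (ew m τ).1 x ^ 2 * (2 * (D i v).1 x ^ 2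
      + 32 * τ ^ 2 * (phi (b0 m)).1 x ^ 2 * (x i + b0 m i) ^ 2 * v.1 x ^ 2) := by
      intro i
      have : D i (ew m τ * v) = ew m τ * (D i v - 4 * Cst τ * Y (b0 m) i * phi (b0 m) * v) := by
        rw [D_mul]; unfold ew; rw [D_Ex, D_mul, D_Cst, D_phi]; ring
      rw [this]
      simp only [Sm_mul, Sm_sub, Sm_ofNat, Cst_apply, Y_apply]
      rw [mul_pow]
      apply mul_le_mul_of_nonneg_left _ (sq_nonneg _)
      nlinarith [sq_nonneg ((D i v).1 x + 4 * τ * (x i + b0 m i) * (phi (b0 m)).1 x * v.1 x)]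
    refine (Finset.sum_le_sum fun i _ => this i).trans (le_of_eq ?_)
    rw [← Finset.mul_sum, Finset.sum_add_distrib, ← Finset.mul_sum, Finset.mul_sum _ _ (32 * τ ^ 2 * (phi (b0 m)).1 x ^ 2), Finset.sum_mul]
  have h3 : 32 * τ ^ 2 * (phi (b0 m)).1 x ^ 2 * (rho (b0 m)).1 x * v.1 x ^ 2
      ≤ 152 * τ ^ 2 * v.1 x ^ 2 := by
    calc _ ≤ 32 * τ ^ 2 * 1 ^ 2 * (19/4) * v.1 x ^ 2 := by gcongr
      _ = _ := by ring
  have hτ2 : 1 ≤ τ ^ 2 := by nlinarith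
  calc (ew m τ * v).1 x ^ 2 + (Gr (ew m τ * v)).1 x
      ≤ (ew m τ).1 x ^ 2 * v.1 x ^ 2 + (ew m τ).1 x ^ 2 * (2 * (Gr v).1 x + 152 * τ ^ 2 * v.1 x ^ 2) := by
        rw [Sm_mul, mul_pow]
        gcongr
        exact hG.trans (by gcongr)
    _ = (ew m τ).1 x ^ 2 * (v.1 x ^ 2 + 2 * (Gr v).1 x + 152 * τ ^ 2 * v.1 x ^ 2) := by ring
    _ ≤ Real.exp (2 * τ) * (153 * τ ^ 2 * (v.1 x ^ 2 + (Gr v).1 x)) := by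
        gcongr
        nlinarith [mul_le_mul_of_nonneg_right hτ2 (sq_nonneg (v.1 x)),
          mul_le_mul_of_nonneg_right hτ2 hGv]
    _ = _ := by ring

/-- Carleman inequality -/
theorem carleman (m : ℕ) : ∃ c > 0, ∃ τ0 : ℝ, 1 ≤ τ0 ∧ ∃ C : ℝ, 0 ≤ C ∧ ∀ τ ≥ τ0,
    ∀ v : Sm (m+1), Van v →
    c * τ ^ 3 * ∫ x in HS m, ((ew m τ * v) ^ 2).1 x
      ≤ (∫ x in HS m, ((ew m τ * L v) ^ 2).1 x)
        + C * τ ^ 5 * Real.exp (2 * τ) * ∫ y : En m, (v ^ 2 + Gr v).1 (inc y) := by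
  obtain ⟨c, hc, τ0, h0, H⟩ := carl_pt (m := m)
  obtain ⟨C, hC0, hC⟩ := flux_bd (m := m)
  refine ⟨c, hc, τ0, h0, 306 * C, by positivity, ?_⟩
  intro τ hτ v hv
  have hτ1 : 1 ≤ τ := h0.trans hτ
  have hw : Van (ew m τ * v) := hv.mul_left _
  set w := ew m τ * v
  have hF := fun i => flux_van hw (Cst τ) i
  have hdiv := int_div (fun i => flux (b0 m) (Cst τ) w i) (fun i => (hF i).cs)
  have i1 : IntegrableOn (w ^ 2).1 (HS m) := (hw.pow 1).int
  have i2 : IntegrableOn (∑ i, D i (flux (b0 m) (Cst τ) w i)).1 (HS m) :=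
    (Van.sum fun i => (hF i).D i).int
  have i3 : IntegrableOn ((ew m τ * L v) ^ 2).1 (HS m) := ((hv.L.mul_left _).pow 1).int
  have hIntg : ∫ x in HS m, (c * τ ^ 3 * (w ^ 2).1 x
      + 2 * (∑ i, D i (flux (b0 m) (Cst τ) w i)).1 x) ≤ ∫ x in HS m, ((ew m τ * L v) ^ 2).1 x := by
    refine setIntegral_mono_on ((i1.const_mul _).add (i2.const_mul _)) i3 (HS_meas m) ?_
    intro x hx
    exact H τ hτ v hv x (le_of_lt (mem_HS.1 hx))
  rw [integral_add (i1.const_mul _) (i2.const_mul _), integral_const_mul, integral_const_mul,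
    hdiv] at hIntg
  have hb : ∫ y : En m, (flux (b0 m) (Cst τ) w (Fin.last m)).1 (inc y)
      ≤ C * τ ^ 3 * (153 * τ ^ 2 * Real.exp (2 * τ)) * ∫ y : En m, (v ^ 2 + Gr v).1 (inc y) := by
    rw [← integral_const_mul]
    refine integral_mono (hF _).bint (((hv.pow 1).add hv.Gr).bint.const_mul _) ?_
    intro y
    refine (le_abs_self _).trans ((hC τ hτ1 w hw y).trans ?_)
    show _ ≤ C * τ ^ 3 * (153 * τ ^ 2 * Real.exp (2 * τ)) * (v.1 (inc y) ^ 2 + (Gr v).1 (inc y))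
    rw [mul_assoc (C * τ ^ 3)]
    have := bd_w τ hτ1 v hv (inc y)
    gcongr
  nlinarith

end

section

variable {m : ℕ}

/-- half ball of radius two -/
def HB (m : ℕ) (R : ℝ) : Set (En (m+1)) := {x | ‖x‖ < R ∧ 0 < x (Fin.last m)}

lemma mem_HB {R : ℝ} {x : En (m+1)} : x ∈ HB m R ↔ ‖x‖ < R ∧ 0 < x (Fin.last m) := by
  simp [HB]

lemma HB_meas (R : ℝ) : MeasurableSet (HB m R) := by
  have : HB m R = ball 0 R ∩ HS m := by
    ext x; rw [mem_HB, mem_inter_iff, mem_ball_zero_iff, mem_HS]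
  rw [this]
  exact measurableSet_ball.inter (HS_meas m)

lemma HB_sub (R : ℝ) : HB m R ⊆ HS m := fun _ hx => mem_HS.2 (mem_HB.1 hx).2

lemma HB_mono {R S : ℝ} (h : R ≤ S) : HB m R ⊆ HB m S := fun _ hx =>
  mem_HB.2 ⟨(mem_HB.1 hx).1.trans_le h, (mem_HB.1 hx).2⟩

lemma HB_int (f : Sm (m+1)) (R : ℝ) : IntegrableOn f.1 (HB m R) := by
  refine IntegrableOn.mono_set (t := closedBall 0 R) ?_ ?_
  · exact (Sm_cont f).continuousOn.integrableOn_compact (isCompact_closedBall _ _)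
  · intro x hx
    rw [mem_closedBall_zero_iff]
    exact (mem_HB.1 hx).1.le

lemma Van.HB_eq {f : Sm (m+1)} (hf : Van f) :
    ∫ x in HS m, f.1 x = ∫ x in HB m 2, f.1 x := by
  refine (setIntegral_eq_of_subset_of_forall_sdiff_eq_zero (HS_meas m) (HB_sub 2) ?_)
  intro x hx
  by_contra h
  have h1 : (rho (b0 m)).1 x ≤ 19/4 := by
    by_contra h'
    exact h (hf x (lt_of_not_ge h'))
  have h2 := mem_HS.1 hx.1
  exact hx.2 (mem_HB.2 ⟨norm_lt_of_rho h2.le h1, h2⟩)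

/-- gradient pairing -/
def Gd {n : ℕ} (f g : Sm n) : Sm n := ∑ i, D i f * D i g

lemma Gd_sq {n : ℕ} (f g : Sm n) (x : En n) :
    (Gd f g).1 x ^ 2 ≤ (Gr f).1 x * (Gr g).1 x := by
  rw [Gr_apply, Gr_apply]
  unfold Gd
  rw [Sm_sum_apply]
  exact Finset.sum_mul_sq_le_sq_mul_sq _ _ _

lemma Gd_self {n : ℕ} (f : Sm n) : Gd f f = Gr f := by
  unfold Gd Gr; simp only [pow_two]

lemma Gd_comm {n : ℕ} (f g : Sm n) : Gd f g = Gd g f := by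
  unfold Gd; simp only [mul_comm]

lemma Gd_pow {n : ℕ} (f g : Sm n) (k : ℕ) : Gd (f ^ (k+1)) g = (k+1 : ℕ) * f ^ k * Gd f g := by
  unfold Gd
  rw [Finset.mul_sum]
  exact Finset.sum_congr rfl fun i _ => by rw [D_pow]; ring

lemma div_prod {n : ℕ} (p f g : Sm n) :
    ∑ i, D i (p * (f * D i g)) = p * f * L g + p * Gd f g + f * Gd p g := by
  have : ∀ i, p * (f * D i g) = (p * f) * D i g := fun i => by ring
  simp only [this]
  rw [div_fmul]
  unfold L Gd
  have : ∑ i : Fin n, D i (p * f) * D i g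
      = p * ∑ i, D i f * D i g + f * ∑ i, D i p * D i g := by
    rw [Finset.mul_sum, Finset.mul_sum, ← Finset.sum_add_distrib]
    exact Finset.sum_congr rfl fun i _ => by rw [D_mul]; ring
  rw [this]; ring

lemma bterm {p : Sm (m+1)} (hp : Van p) (h1 : ∀ x, |p.1 x| ≤ 1) (f g : Sm (m+1)) :
    |∫ y : En m, (p * (f * g)).1 (inc y)| ≤ (bq f + bq g) / 2 := by
  have hV : Van (p * (f * g)) := hp.mul_right _
  rw [← setIntegral_eq_integral_of_forall_compl_eq_zero (s := ball (0 : En m) 2)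
    (fun y hy => hV.inc_zero hy)]
  unfold bq
  rw [← integral_add (bq_int f) (bq_int g), ← integral_div]
  refine abs_integral_le_integral_abs.trans ?_
  refine integral_mono_of_nonneg (Filter.Eventually.of_forall fun _ => abs_nonneg _)
    (((bq_int f).add (bq_int g)).div_const _) (Filter.Eventually.of_forall fun y => ?_)
  show |p.1 (inc y) * (f.1 (inc y) * g.1 (inc y))| ≤ (f.1 (inc y) ^ 2 + g.1 (inc y) ^ 2) / 2
  rw [abs_mul]
  have h2 : |f.1 (inc y) * g.1 (inc y)| ≤ (f.1 (inc y) ^ 2 + g.1 (inc y) ^ 2) / 2 := by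
    rw [abs_le]; constructor <;>
      nlinarith [sq_nonneg (f.1 (inc y) + g.1 (inc y)), sq_nonneg (f.1 (inc y) - g.1 (inc y))]
  calc _ ≤ 1 * |f.1 (inc y) * g.1 (inc y)| := by gcongr; exact h1 _
    _ ≤ _ := by rw [one_mul]; exact h2

lemma green {p : Sm (m+1)} (hp : Van p) (h1 : ∀ x, |p.1 x| ≤ 1) (f g : Sm (m+1)) :
    |∫ x in HB m 2, (p * f * L g + p * Gd f g + f * Gd p g).1 x|
      ≤ (bq f + bq (D (Fin.last m) g)) / 2 := by
  have hV : ∀ i, Van (p * (f * D i g)) := fun i => hp.mul_right _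
  rw [← div_prod, ← (Van.sum fun i => (hV i).D i).HB_eq, int_div _ (fun i => (hV i).cs), abs_neg]
  exact bterm hp h1 _ _

/-- outer cutoff -/
def eta (m : ℕ) : Sm (m+1) := cut m (9/2) (19/4)
lemma eta_van : Van (eta m) := cut_van (by norm_num) (by norm_num)
lemma eta_nonneg (x : En (m+1)) : 0 ≤ (eta m).1 x := cut_nonneg _ _ _
lemma eta_le_one (x : En (m+1)) : (eta m).1 x ≤ 1 := cut_le_one _ _ _
lemma eta_one {x : En (m+1)} (h : (rho (b0 m)).1 x ≤ 9/2) : (eta m).1 x = 1 :=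
  cut_one (by norm_num) h
lemma eta_pow_abs (k : ℕ) (x : En (m+1)) : |((eta m) ^ k).1 x| ≤ 1 := by
  rw [Sm_pow, abs_pow, abs_of_nonneg (eta_nonneg x)]
  exact pow_le_one₀ (eta_nonneg x) (eta_le_one x)

/-- integral over the half ball -/
def J (f : Sm (m+1)) : ℝ := ∫ x in HB m 2, f.1 x

lemma J_add (f g : Sm (m+1)) : J (f + g) = J f + J g :=
  integral_add (HB_int f 2) (HB_int g 2)
lemma J_sub (f g : Sm (m+1)) : J (f - g) = J f - J g :=
  integral_sub (HB_int f 2) (HB_int g 2)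
lemma J_Cst (c : ℝ) (f : Sm (m+1)) : J (Cst c * f) = c * J f :=
  integral_const_mul c _
lemma J_mono {f g : Sm (m+1)} (h : ∀ x ∈ HB m 2, f.1 x ≤ g.1 x) : J f ≤ J g :=
  setIntegral_mono_on (HB_int f 2) (HB_int g 2) (HB_meas 2) h
lemma J_nonneg {f : Sm (m+1)} (h : ∀ x ∈ HB m 2, 0 ≤ f.1 x) : 0 ≤ J f :=
  setIntegral_nonneg (HB_meas 2) h

lemma cs_bound {a b c K A B s : ℝ} (hc : c ^ 2 ≤ A * B) (hA : A ≤ K) (hB : 0 ≤ B) (hs : 0 < s)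
    (hK0 : 0 ≤ K) : |a * (b * c)| ≤ s * (b ^ 2 * B) + K / (4 * s) * a ^ 2 := by
  have h1 : (b * c) ^ 2 ≤ K * (b ^ 2 * B) := by
    have : c ^ 2 ≤ K * B := hc.trans (by gcongr)
    calc (b * c) ^ 2 = b ^ 2 * c ^ 2 := by ring
      _ ≤ b ^ 2 * (K * B) := by gcongr
      _ = _ := by ring
  set X := b ^ 2 * B
  have hX : 0 ≤ X := by positivity
  set z := b * c
  have hK : 0 ≤ K * X := (sq_nonneg z).trans h1
  refine abs_le_of_sq_le_sq ?_ (by positivity)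
  have e : (s * X + K / (4 * s) * a ^ 2) ^ 2
      = (s * X - K / (4 * s) * a ^ 2) ^ 2 + K * X * a ^ 2 := by
    field_simp; ring
  rw [e, mul_pow]
  nlinarith [sq_nonneg (s * X - K / (4 * s) * a ^ 2), mul_le_mul_of_nonneg_left h1 (sq_nonneg a)]

lemma cacc1 {K : ℝ} (hK1 : 1 ≤ K) (hK : ∀ x, (Gr (eta m)).1 x ≤ K) (u : Sm (m+1)) {s : ℝ}
    (hs : 0 < s) :
    J (eta m ^ 2 * Gr u) ≤ s * J (eta m ^ 4 * L u ^ 2) + (4 * K + 1 / s) * J (u ^ 2)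
      + (bq u + bq (D (Fin.last m) u)) := by
  have hg := green (eta_van.pow 1) (eta_pow_abs 2) u u
  rw [Gd_self, Gd_pow] at hg
  have hlow : J (Cst (1/2) * (eta m ^ 2 * Gr u) - Cst (s/2) * (eta m ^ 4 * L u ^ 2)
      - Cst (2 * K + 1 / (2 * s)) * u ^ 2) ≤ J (eta m ^ 2 * u * L u + eta m ^ 2 * Gr u
        + u * (((1 + 1 : ℕ) : Sm (m+1)) * eta m ^ 1 * Gd (eta m) u)) := by
    refine J_mono fun x _ => ?_
    simp only [Sm_mul, Sm_sub, Sm_add, Sm_pow, Cst_apply, Sm_natCast]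
    have h1 := cs_bound (a := 2 * u.1 x) (b := (eta m).1 x) (Gd_sq (eta m) u x) (hK x)
      (Gr_nonneg u x) (by norm_num : (0:ℝ) < 1/2) (by linarith)
    have h1' := (abs_le.1 h1).1
    have h2 : 0 ≤ s / 2 * ((eta m).1 x ^ 4 * (L u).1 x ^ 2) + (eta m).1 x ^ 2 * u.1 x * (L u).1 x
        + 1 / (2 * s) * u.1 x ^ 2 := by
      have : s / 2 * ((eta m).1 x ^ 4 * (L u).1 x ^ 2) + (eta m).1 x ^ 2 * u.1 x * (L u).1 x
        + 1 / (2 * s) * u.1 x ^ 2 = 1 / (2 * s) * (s * (eta m).1 x ^ 2 * (L u).1 x + u.1 x) ^ 2 := by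
        field_simp; ring
      rw [this]; positivity
    push_cast
    rw [show K / (4 * (1/2)) = K / 2 by ring] at h1'
    linarith
  rw [J_sub, J_sub, J_Cst, J_Cst, J_Cst] at hlow
  have h3 := (le_abs_self _).trans hg
  have h4 : (2 * K + 1 / (2 * s)) * 2 = 4 * K + 1 / s := by field_simp; ring
  rw [← h4]
  unfold J at hlow ⊢
  linarith

lemma cacc2 {K M : ℝ} (hK1 : 1 ≤ K) (hK : ∀ x, (Gr (eta m)).1 x ≤ K) (hM : 0 ≤ M) (u : Sm (m+1))
    (hu : ∀ x ∈ HB m 2, |(L (L u)).1 x| ≤ M * |u.1 x|) {s : ℝ} (hs : 0 < s) :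
    J (eta m ^ 4 * L u ^ 2) ≤ s * J (eta m ^ 6 * Gr (L u)) + 16 * K * J (eta m ^ 2 * Gr u)
      + (2 * M + 16 * K / s) * J (u ^ 2)
      + (bq u + bq (D (Fin.last m) u) + bq (L u) + bq (D (Fin.last m) (L u))) := by
  have hg1 := green (eta_van.pow 3) (eta_pow_abs 4) (L u) u
  have hg2 := green (eta_van.pow 3) (eta_pow_abs 4) u (L u)
  rw [Gd_pow] at hg1 hg2
  rw [Gd_comm (L u) u] at hg1
  set F1 := eta m ^ 4 * L u * L u + eta m ^ 4 * Gd u (L u)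
        + L u * (((3 + 1 : ℕ) : Sm (m+1)) * eta m ^ 3 * Gd (eta m) u) with hF1
  set F2 := eta m ^ 4 * u * L (L u) + eta m ^ 4 * Gd u (L u)
        + u * (((3 + 1 : ℕ) : Sm (m+1)) * eta m ^ 3 * Gd (eta m) (L u)) with hF2
  have hlow : J (Cst (1/2) * (eta m ^ 4 * L u ^ 2) - Cst (s/2) * (eta m ^ 6 * Gr (L u))
      - Cst (8 * K) * (eta m ^ 2 * Gr u) - Cst (M + 8 * K / s) * u ^ 2) ≤ J (F1 - F2) := by
    refine J_mono fun x hx => ?_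
    simp only [hF1, hF2, Sm_mul, Sm_sub, Sm_add, Sm_pow, Cst_apply, Sm_natCast]
    have h1 := cs_bound (a := 4 * u.1 x) (b := (eta m).1 x ^ 3) (Gd_sq (eta m) (L u) x) (hK x)
      (Gr_nonneg (L u) x) (by positivity : (0:ℝ) < s/2) (by linarith)
    have h1' := (abs_le.1 h1).2
    have h2 := cs_bound (a := 4 * (eta m).1 x ^ 2 * (L u).1 x) (b := (eta m).1 x)
      (Gd_sq (eta m) u x) (hK x)
      (Gr_nonneg u x) (by positivity : (0:ℝ) < 8 * K) (by linarith)
    have h2' := (abs_le.1 h2).1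
    have h3 : (eta m).1 x ^ 4 * u.1 x * (L (L u)).1 x ≤ M * u.1 x ^ 2 := by
      have e4 : (eta m).1 x ^ 4 ≤ 1 := pow_le_one₀ (eta_nonneg x) (eta_le_one x)
      calc (eta m).1 x ^ 4 * u.1 x * (L (L u)).1 x ≤ |(eta m).1 x ^ 4 * u.1 x * (L (L u)).1 x| :=
            le_abs_self _
        _ = (eta m).1 x ^ 4 * (|u.1 x| * |(L (L u)).1 x|) := by
            rw [abs_mul, abs_mul, abs_of_nonneg (pow_nonneg (eta_nonneg x) 4), mul_assoc]
        _ ≤ 1 * (|u.1 x| * (M * |u.1 x|)) := by gcongr; exact hu x hx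
        _ = M * |u.1 x| ^ 2 := by ring
        _ = _ := by rw [sq_abs]
    rw [show K / (4 * (s/2)) * (4 * u.1 x) ^ 2 = 8 * K / s * u.1 x ^ 2 by field_simp; ring] at h1'
    rw [show K / (4 * (8 * K)) = 1 / 32 by field_simp; norm_num] at h2'
    push_cast
    linarith
  rw [J_sub, J_sub, J_sub, J_Cst, J_Cst, J_Cst, J_Cst, J_sub] at hlow
  have h3 := (abs_le.1 hg1).2
  have h4 := (abs_le.1 hg2).1
  have h5 : (M + 8 * K / s) * 2 = 2 * M + 16 * K / s := by ring
  rw [← h5]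
  unfold J at hlow ⊢
  linarith

lemma cacc3 {K M : ℝ} (hK1 : 1 ≤ K) (hK : ∀ x, (Gr (eta m)).1 x ≤ K) (hM : 0 ≤ M) (u : Sm (m+1))
    (hu : ∀ x ∈ HB m 2, |(L (L u)).1 x| ≤ M * |u.1 x|) :
    J (eta m ^ 6 * Gr (L u)) ≤ 37 * K * J (eta m ^ 4 * L u ^ 2) + M ^ 2 * J (u ^ 2)
      + (bq (L u) + bq (D (Fin.last m) (L u))) := by
  have hg := green (eta_van.pow 5) (eta_pow_abs 6) (L u) (L u)
  rw [Gd_self, Gd_pow] at hg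
  have hlow : J (Cst (1/2) * (eta m ^ 6 * Gr (L u)) - Cst (37 / 2 * K) * (eta m ^ 4 * L u ^ 2)
      - Cst (M ^ 2 / 2) * u ^ 2) ≤ J (eta m ^ 6 * L u * L (L u) + eta m ^ 6 * Gr (L u)
        + L u * (((5 + 1 : ℕ) : Sm (m+1)) * eta m ^ 5 * Gd (eta m) (L u))) := by
    refine J_mono fun x hx => ?_
    simp only [Sm_mul, Sm_sub, Sm_add, Sm_pow, Cst_apply, Sm_natCast]
    have h1 := cs_bound (a := 6 * (eta m).1 x ^ 2 * (L u).1 x) (b := (eta m).1 x ^ 3)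
      (Gd_sq (eta m) (L u) x) (hK x)
      (Gr_nonneg (L u) x) (by norm_num : (0:ℝ) < 1/2) (by linarith)
    have h1' := (abs_le.1 h1).1
    have h3 : |(eta m).1 x ^ 6 * (L u).1 x * (L (L u)).1 x|
        ≤ 1 / 2 * ((eta m).1 x ^ 4 * (L u).1 x ^ 2) + M ^ 2 / 2 * u.1 x ^ 2 := by
      have e4 : (eta m).1 x ^ 4 ≤ 1 := pow_le_one₀ (eta_nonneg x) (eta_le_one x)
      have e0 := eta_nonneg x
      calc |(eta m).1 x ^ 6 * (L u).1 x * (L (L u)).1 x|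
          = (eta m).1 x ^ 4 * ((eta m).1 x ^ 2 * |(L u).1 x| * |(L (L u)).1 x|) := by
            rw [abs_mul, abs_mul, abs_of_nonneg (pow_nonneg (eta_nonneg x) 6)]; ring
        _ ≤ 1 * ((eta m).1 x ^ 2 * |(L u).1 x| * (M * |u.1 x|)) := by gcongr; exact hu x hx
        _ ≤ 1 / 2 * ((eta m).1 x ^ 4 * |(L u).1 x| ^ 2) + M ^ 2 / 2 * |u.1 x| ^ 2 := by
          nlinarith [sq_nonneg ((eta m).1 x ^ 2 * |(L u).1 x| - M * |u.1 x|)]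
        _ = _ := by rw [sq_abs, sq_abs]
    have h3' := (abs_le.1 h3).1
    have h6 : 1 / 2 * ((eta m).1 x ^ 4 * (L u).1 x ^ 2)
        ≤ K / 2 * ((eta m).1 x ^ 4 * (L u).1 x ^ 2) := by gcongr
    rw [show K / (4 * (1/2)) = K / 2 by ring] at h1'
    push_cast
    linarith
  rw [J_sub, J_sub, J_Cst, J_Cst, J_Cst] at hlow
  have h3 := (le_abs_self _).trans hg
  unfold J at hlow ⊢
  linarith

lemma cacc_real {K M I0 I1 I2 I3 d : ℝ} (hK : 1 ≤ K) (hI0 : 0 ≤ I0)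
    (hd : 0 ≤ d)
    (h1 : I1 ≤ 1 / (64 * K) * I2 + (4 * K + 1 / (1 / (64 * K))) * I0 + d)
    (h2 : I2 ≤ 1 / (148 * K) * I3 + 16 * K * I1 + (2 * M + 16 * K / (1 / (148 * K))) * I0 + d)
    (h3 : I3 ≤ 37 * K * I2 + M ^ 2 * I0 + d) :
    I1 + I2 + I3 ≤ 1000000 * K ^ 3 * ((1 + M ^ 2) * I0 + d) := by
  have hK0 : 0 < K := by linarith
  have e1 : 16 * K * (1 / (64 * K) * I2 + (4 * K + 1 / (1 / (64 * K))) * I0 + d)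
      = I2 / 4 + 1088 * K ^ 2 * I0 + 16 * K * d := by field_simp; ring
  have a1 := mul_le_mul_of_nonneg_left h1 (by positivity : 0 ≤ 16 * K)
  rw [e1] at a1
  have e3 : 1 / (148 * K) * (37 * K * I2 + M ^ 2 * I0 + d)
      = I2 / 4 + (1 / (148 * K)) * (M ^ 2 * I0 + d) := by field_simp; ring
  have a3 := mul_le_mul_of_nonneg_left h3 (by positivity : 0 ≤ 1 / (148 * K))
  rw [e3] at a3
  have hs : 1 / (148 * K) ≤ 1 := by rw [div_le_one (by positivity)]; linarith
  have hX : 0 ≤ M ^ 2 * I0 + d := by positivity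
  have a4 : 1 / (148 * K) * (M ^ 2 * I0 + d) ≤ M ^ 2 * I0 + d := by
    nlinarith
  have e2 : 16 * K / (1 / (148 * K)) = 2368 * K ^ 2 := by field_simp; ring
  rw [e2] at h2
  have hMM : 2 * M * I0 ≤ (1 + M ^ 2) * I0 := by
    apply mul_le_mul_of_nonneg_right _ hI0; nlinarith [sq_nonneg (M - 1)]
  set Z := (1 + M ^ 2) * I0 + d with hZ
  have hZ0 : 0 ≤ Z := by positivity
  have hI0Z : I0 ≤ Z := by nlinarith [mul_nonneg (sq_nonneg M) hI0]
  have hMZ : M ^ 2 * I0 ≤ Z := by nlinarith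
  have hdZ : d ≤ Z := by have : 0 ≤ (1 + M ^ 2) * I0 := by positivity
                         linarith
  have hMMZ : 2 * M * I0 ≤ Z := by linarith
  have hKK : K ≤ K ^ 2 := by nlinarith
  have hKKK : K ^ 2 ≤ K ^ 3 := by nlinarith [sq_nonneg K]
  have f1 : K ^ 2 * I0 ≤ K ^ 2 * Z := by gcongr
  have f2 : K * d ≤ K ^ 2 * Z := by gcongr
  have f3 : Z ≤ K ^ 2 * Z := by nlinarith
  have hU : I2 ≤ 7000 * (K ^ 2 * Z) := by linarith
  have g1 : 1 / (64 * K) * I2 ≤ 7000 * (K ^ 2 * Z) := by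
    have : 1 / (64 * K) ≤ 1 := by rw [div_le_one (by positivity)]; linarith
    have h0 : 0 < 1 / (64 * K) := by positivity
    have h00 : 0 ≤ K ^ 2 * Z := by positivity
    calc 1 / (64 * K) * I2 ≤ 1 / (64 * K) * (7000 * (K ^ 2 * Z)) := by gcongr
      _ ≤ 1 * (7000 * (K ^ 2 * Z)) := by gcongr
      _ = _ := one_mul _
  have e4 : 1 / (1 / (64 * K)) = 64 * K := by field_simp
  rw [e4] at h1
  have f4 : K * I0 ≤ K ^ 2 * Z := by gcongr
  have g3 : 37 * K * I2 ≤ 259000 * (K ^ 3 * Z) := by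
    calc 37 * K * I2 ≤ 37 * K * (7000 * (K ^ 2 * Z)) := by gcongr
      _ = _ := by ring
  have f5 : K ^ 2 * Z ≤ K ^ 3 * Z := by gcongr
  linarith

theorem cacc (m : ℕ) : ∃ C : ℝ, 0 ≤ C ∧ ∀ M : ℝ, 0 ≤ M → ∀ u : Sm (m+1),
    (∀ x ∈ HB m 2, |(L (L u)).1 x| ≤ M * |u.1 x|) →
    J (eta m ^ 2 * Gr u) + J (eta m ^ 4 * L u ^ 2) + J (eta m ^ 6 * Gr (L u))
      ≤ C * ((1 + M ^ 2) * J (u ^ 2) + Dat u) := by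
  obtain ⟨K0, hK0, hKb⟩ := (eta_van (m := m)).Gr.bdd
  set K := K0 + 1
  have hK1 : 1 ≤ K := by linarith
  have hK : ∀ x, (Gr (eta m)).1 x ≤ K := fun x => ((le_abs_self _).trans (hKb x)).trans (by linarith)
  set N : ℝ := 2 + 2 * ((m+1 : ℕ) : ℝ) ^ 2
  have hN : 1 ≤ N := by have : 0 ≤ ((m+1 : ℕ) : ℝ) ^ 2 := by positivity
                        linarith
  refine ⟨1000000 * K ^ 3 * N, by positivity, fun M hM u hu => ?_⟩
  have q0 := bq0 u
  have q1 := bq1 u (Fin.last m)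
  have q2 := bqL u
  have q3 := bqDL u (Fin.last m)
  have n0 : ∀ f : Sm (m+1), 0 ≤ bq f := fun f => integral_nonneg fun y => sq_nonneg _
  have n1 := n0 u
  have n2 := n0 (D (Fin.last m) u)
  have n3 := n0 (L u)
  have n4 := n0 (D (Fin.last m) (L u))
  have hd : bq u + bq (D (Fin.last m) u) + bq (L u) + bq (D (Fin.last m) (L u)) ≤ N * Dat u := by
    linarith
  have hI0 : 0 ≤ J (u ^ 2) := J_nonneg fun x _ => sq_nonneg _
  have h1 := cacc1 hK1 hK u (s := 1 / (64 * K)) (by positivity)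
  have h2 := cacc2 hK1 hK hM u hu (s := 1 / (148 * K)) (by positivity)
  have h3 := cacc3 hK1 hK hM u hu
  have := cacc_real (M := M) (d := N * Dat u) hK1 hI0 (by linarith) (h1.trans (by linarith))
    (h2.trans (by linarith)) (h3.trans (by linarith))
  refine this.trans ?_
  rw [mul_assoc (1000000 * K ^ 3)]
  have : 0 ≤ (1 + M ^ 2) * J (u ^ 2) := by positivity
  gcongr
  nlinarith

end

section

variable {m : ℕ}

/-- inner cutoff -/
def chi (m : ℕ) : Sm (m+1) := cut m (17/4) (9/2)
lemma chi_van : Van (chi m) := cut_van (by norm_num) (by norm_num)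

lemma Lap_mul {n : ℕ} (f g : Sm n) : L (f * g) = f * L g + (2 * Gd f g + g * L f) := by
  unfold L Gd
  simp only [Finset.mul_sum, ← Finset.sum_add_distrib]
  exact Finset.sum_congr rfl fun i _ => by
    rw [D_mul, map_add, D_mul, D_mul]; ring

lemma chi_err : ∃ K : ℝ, 0 ≤ K ∧ ∀ (f : Sm (m+1)) (k l : ℕ) (τ : ℝ), 0 ≤ τ → ∀ x,
    ((ew m τ * (2 * Gd (chi m) f + f * L (chi m))) ^ 2).1 x
      ≤ (Cst (Real.exp (2 * τ * Real.exp (-(17/2))) * K) *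
          (eta m ^ k * Gr f + eta m ^ l * f ^ 2)).1 x := by
  obtain ⟨K1, hK1, h1⟩ := (chi_van (m := m)).Gr.bdd
  obtain ⟨K2, hK2, h2⟩ := (chi_van (m := m)).L.bdd
  refine ⟨8 * K1 + 2 * K2 ^ 2, by positivity, fun f k l τ hτ x => ?_⟩
  simp only [Sm_mul, Sm_add, Sm_pow, Sm_ofNat, Cst_apply]
  have hG := Gr_nonneg f x
  by_cases hx : (rho (b0 m)).1 x < 17/4 ∨ 9/2 < (rho (b0 m)).1 x
  · have e1 : (Gd (chi m) f).1 x = 0 := by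
      unfold Gd; rw [Sm_sum_apply]
      refine Finset.sum_eq_zero fun i _ => ?_
      rw [Sm_mul, chi, cut_D_zero (by norm_num) hx, zero_mul]
    have e2 : (L (chi m)).1 x = 0 := by
      rw [Lap_apply]
      exact Finset.sum_eq_zero fun i _ => cut_DD_zero (by norm_num) hx i
    rw [e1, e2]
    have := eta_nonneg x
    have h0 : 0 ≤ Real.exp (2 * τ * Real.exp (-(17/2))) * (8 * K1 + 2 * K2 ^ 2) *
        ((eta m).1 x ^ k * (Gr f).1 x + (eta m).1 x ^ l * f.1 x ^ 2) := by positivity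
    simpa using h0
  · push Not at hx
    rw [eta_one hx.2, one_pow, one_pow, one_mul, one_mul, mul_pow, mul_assoc (Real.exp _)]
    have he : (ew m τ).1 x ^ 2 ≤ Real.exp (2 * τ * Real.exp (-(17/2))) := by
      rw [ew_apply, ← Real.exp_nat_mul]
      apply Real.exp_le_exp.2
      have : (phi (b0 m)).1 x ≤ Real.exp (-(17/2)) := by
        rw [phi_apply]; apply Real.exp_le_exp.2; linarith [hx.1]
      push_cast
      nlinarith
    have hg := Gd_sq (chi m) f x
    have h1' := (le_abs_self _).trans (h1 x)
    have h2' : (L (chi m)).1 x ^ 2 ≤ K2 ^ 2 := by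
      rw [← sq_abs]; have := h2 x; gcongr
    have hg' : (Gd (chi m) f).1 x ^ 2 ≤ K1 * (Gr f).1 x := hg.trans (by gcongr)
    have hb : (2 * (Gd (chi m) f).1 x + f.1 x * (L (chi m)).1 x) ^ 2
        ≤ (8 * K1 + 2 * K2 ^ 2) * ((Gr f).1 x + f.1 x ^ 2) := by
      have a1 : (f.1 x * (L (chi m)).1 x) ^ 2 ≤ f.1 x ^ 2 * K2 ^ 2 := by
        rw [mul_pow]; gcongr
      have a2 : 0 ≤ K1 * f.1 x ^ 2 := by positivity
      have a3 : 0 ≤ K2 ^ 2 * (Gr f).1 x := by positivity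
      nlinarith [sq_nonneg (2 * (Gd (chi m) f).1 x - f.1 x * (L (chi m)).1 x)]
    gcongr

lemma chi_bd : ∃ K : ℝ, 0 ≤ K ∧ ∀ (f : Sm (m+1)) (Q : ℝ), bq f ≤ Q → (∀ i, bq (D i f) ≤ Q) →
    ∫ y : En m, ((chi m * f) ^ 2 + Gr (chi m * f)).1 (inc y) ≤ K * Q := by
  obtain ⟨K1, hK1, h1⟩ := (chi_van (m := m)).Gr.bdd
  refine ⟨1 + 2 * K1 + 2 * ((m+1 : ℕ) : ℝ), by positivity, fun f Q h0 hi => ?_⟩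
  have hV : Van ((chi m * f) ^ 2 + Gr (chi m * f)) :=
    ((chi_van.mul_right f).pow 1).add (chi_van.mul_right f).Gr
  rw [← setIntegral_eq_integral_of_forall_compl_eq_zero (s := ball (0 : En m) 2)
    (fun y hy => hV.inc_zero hy)]
  have hpt : ∀ y : En m, ((chi m * f) ^ 2 + Gr (chi m * f)).1 (inc y)
      ≤ (1 + 2 * K1) * f.1 (inc y) ^ 2 + 2 * ∑ i, (D i f).1 (inc y) ^ 2 := by
    intro y
    set x := inc y
    have c0 := cut_nonneg (m := m) (17/4) (9/2) x
    have c1 := cut_le_one (m := m) (17/4) (9/2) x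
    have c2 : (chi m).1 x ^ 2 ≤ 1 := pow_le_one₀ c0 c1
    have hG : (Gr (chi m * f)).1 x ≤ 2 * K1 * f.1 x ^ 2 + 2 * ∑ i, (D i f).1 x ^ 2 := by
      have hh : (Gr (chi m * f)).1 x ≤ 2 * (Gr (chi m)).1 x * f.1 x ^ 2
          + 2 * ∑ i, (D i f).1 x ^ 2 := by
        rw [Gr_apply, Gr_apply, Finset.mul_sum, Finset.sum_mul, Finset.mul_sum,
          ← Finset.sum_add_distrib]
        refine Finset.sum_le_sum fun i _ => ?_
        rw [D_mul]
        simp only [Sm_add, Sm_mul]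
        have : (chi m).1 x ^ 2 * (D i f).1 x ^ 2 ≤ 1 * (D i f).1 x ^ 2 := by gcongr
        nlinarith [sq_nonneg ((D i (chi m)).1 x * f.1 x - (chi m).1 x * (D i f).1 x)]
      have h1' := (le_abs_self _).trans (h1 x)
      refine hh.trans ?_
      gcongr
    have hf : (chi m).1 x ^ 2 * f.1 x ^ 2 ≤ 1 * f.1 x ^ 2 := by gcongr
    rw [Sm_add, Sm_pow, Sm_mul, mul_pow]
    linarith
  have hIntg : IntegrableOn (fun y : En m => (1 + 2 * K1) * f.1 (inc y) ^ 2
      + 2 * ∑ i, (D i f).1 (inc y) ^ 2) (ball (0 : En m) 2) :=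
    ((bq_int f).const_mul _).add
      ((integrable_finsetSum _ fun i _ => bq_int (D i f)).const_mul _)
  refine (integral_mono hV.bint.integrableOn hIntg hpt).trans ?_
  rw [integral_add ((bq_int f).const_mul _)
      ((integrable_finsetSum _ fun i _ => bq_int (D i f)).const_mul _), integral_const_mul,
      integral_const_mul, integral_finsetSum _ fun i _ => bq_int (D i f)]
  have hs : ∑ i, ∫ y in ball (0 : En m) 2, (D i f).1 (inc y) ^ 2 ≤ ((m+1 : ℕ) : ℝ) * Q := by
    refine (Finset.sum_le_sum fun i _ => hi i).trans ?_
    simp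
  have h0' : ∫ y in ball (0 : En m) 2, f.1 (inc y) ^ 2 ≤ Q := h0
  have := mul_le_mul_of_nonneg_left h0' (by positivity : 0 ≤ 1 + 2 * K1)
  linarith

/-- weighted norm -/
def XX (m : ℕ) (τ : ℝ) (f : Sm (m+1)) : ℝ := J ((ew m τ * (chi m * f)) ^ 2)

theorem step (m : ℕ) : ∃ c > 0, ∃ τ0 : ℝ, 1 ≤ τ0 ∧ ∃ K : ℝ, 0 ≤ K ∧ ∀ τ ≥ τ0,
    ∀ (f : Sm (m+1)) (k l : ℕ) (Q : ℝ), bq f ≤ Q → (∀ i, bq (D i f) ≤ Q) →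
    c * τ ^ 3 * XX m τ f ≤ 2 * XX m τ (L f)
      + K * Real.exp (2 * τ * Real.exp (-(17/2))) * (J (eta m ^ k * Gr f) + J (eta m ^ l * f ^ 2))
      + K * τ ^ 5 * Real.exp (2 * τ) * Q := by
  obtain ⟨c, hc, τ0, h0, C, hC, H⟩ := carleman m
  obtain ⟨K1, hK1, h1⟩ := chi_err (m := m)
  obtain ⟨K2, hK2, h2⟩ := chi_bd (m := m)
  refine ⟨c, hc, τ0, h0, 2 * K1 + C * K2, by positivity, ?_⟩
  intro τ hτ f k l Q hQ hQi
  have hτ1 : 0 ≤ τ := by linarith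
  have hV : Van (chi m * f) := chi_van.mul_right f
  have hH := H τ hτ _ hV
  rw [((hV.mul_left (ew m τ)).pow 1).HB_eq, ((hV.L.mul_left (ew m τ)).pow 1).HB_eq] at hH
  have hQ0 : 0 ≤ Q := le_trans (integral_nonneg fun y => sq_nonneg _) hQ
  have hB := h2 f Q hQ hQi
  have hJ : J ((ew m τ * L (chi m * f)) ^ 2) ≤ J (Cst 2 * (ew m τ * (chi m * L f)) ^ 2
      + Cst 2 * (Cst (Real.exp (2 * τ * Real.exp (-(17/2))) * K1) *
          (eta m ^ k * Gr f + eta m ^ l * f ^ 2))) := by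
    refine J_mono fun x _ => ?_
    have e := h1 f k l τ hτ1 x
    rw [Sm_add, Sm_mul (Cst 2), Sm_mul (Cst 2), Cst_apply]
    rw [Lap_mul]
    refine le_trans ?_ (add_le_add_right (mul_le_mul_of_nonneg_left e (by norm_num : (0:ℝ) ≤ 2)) _)
    simp only [Sm_mul, Sm_add, Sm_pow]
    nlinarith [sq_nonneg ((ew m τ).1 x * ((chi m).1 x * (L f).1 x)
      - (ew m τ).1 x * ((2 : Sm (m+1)).1 x * (Gd (chi m) f).1 x + f.1 x * (L (chi m)).1 x))]
  rw [J_add, J_Cst, J_Cst, J_Cst, J_add] at hJ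
  have hG0 : 0 ≤ J (eta m ^ k * Gr f) + J (eta m ^ l * f ^ 2) := by
    refine add_nonneg (J_nonneg fun x _ => ?_) (J_nonneg fun x _ => ?_)
    · exact mul_nonneg (pow_nonneg (eta_nonneg x) _) (Gr_nonneg f x)
    · exact mul_nonneg (pow_nonneg (eta_nonneg x) _) (sq_nonneg _)
  have a1 : C * τ ^ 5 * Real.exp (2 * τ) * ∫ y : En m, ((chi m * f) ^ 2 + Gr (chi m * f)).1 (inc y)
      ≤ C * τ ^ 5 * Real.exp (2 * τ) * (K2 * Q) := by gcongr
  have a2 : 0 ≤ 2 * K1 * (τ ^ 5 * Real.exp (2 * τ) * Q) := by positivity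
  have a3 : 0 ≤ C * K2 * (Real.exp (2 * τ * Real.exp (-(17/2))) *
      (J (eta m ^ k * Gr f) + J (eta m ^ l * f ^ 2))) := by positivity
  unfold XX
  unfold J at *
  linarith

end

section

variable {m : ℕ}

lemma asm_real {c τ X Y E B M S1 S2 C0 A d : ℝ} (hc : 0 < c) (hτ : 1 ≤ τ) (hX : 0 ≤ X)
    (hE : 0 ≤ E) (hB : 0 ≤ B) (hM : 0 ≤ M) (hA : 0 ≤ A) (hd : 0 ≤ d) (hC0 : 0 ≤ C0)
    (hS1 : 0 ≤ S1) (hS2 : 0 ≤ S2)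
    (h1 : c * τ ^ 3 * X ≤ 2 * Y + E * S1 + B * d)
    (h2 : c * τ ^ 3 * Y ≤ 2 * M ^ 2 * X + E * S2 + B * d)
    (hMt : 3 * M ≤ c * τ ^ 3) (hS : S1 + S2 ≤ C0 * ((1 + M ^ 2) * A + d)) :
    X ≤ 2 * (2 + c) / c ^ 2 * (C0 * (2 + c ^ 2) * (τ ^ 6 * E * A + E * d) + 2 * B * d) := by
  have hτ3 : 1 ≤ τ ^ 3 := one_le_pow₀ hτ
  have hτ6 : τ ^ 6 = τ ^ 3 * τ ^ 3 := by ring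
  rw [hτ6]
  generalize τ ^ 3 = s at *
  have ht0 : 0 ≤ c * s := by positivity
  set G := E * (S1 + S2) + 2 * (B * d) with hG
  have hG0 : 0 ≤ G := by positivity
  have e1 : E * S1 + B * d ≤ G := by
    have : 0 ≤ E * S2 + B * d := by positivity
    rw [hG]; linarith
  have e2 : E * S2 + B * d ≤ G := by
    have : 0 ≤ E * S1 + B * d := by positivity
    rw [hG]; linarith
  have a1 : (c * s) * (c * s * X) ≤ (c * s) * (2 * Y + G) :=
    mul_le_mul_of_nonneg_left (by linarith) ht0
  have a2 : 2 * (c * s * Y) ≤ 4 * M ^ 2 * X + 2 * G := by linarith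
  have hM2 : 9 * M ^ 2 ≤ (c * s) ^ 2 := by nlinarith
  have a3 : 9 * M ^ 2 * X ≤ (c * s) ^ 2 * X := by gcongr
  have a4 : (c * s) ^ 2 * X ≤ 2 * ((2 + c * s) * G) := by nlinarith
  have a5 : (2 + c * s) ≤ (2 + c) * s := by nlinarith
  have a6 : (c * s) ^ 2 * X ≤ 2 * ((2 + c) * s * G) := a4.trans (by gcongr)
  have a7 : c ^ 2 * (s * X) ≤ 2 * ((2 + c) * G) := by
    have hs : 0 < s := by linarith
    have : s * (c ^ 2 * (s * X)) ≤ s * (2 * ((2 + c) * G)) := by linarith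
    exact le_of_mul_le_mul_left this hs
  have a8 : c ^ 2 * X ≤ 2 * ((2 + c) * G) := by
    refine le_trans ?_ a7
    gcongr; nlinarith
  have a9 : X ≤ 2 * (2 + c) / c ^ 2 * G := by
    rw [div_mul_eq_mul_div, le_div_iff₀ (by positivity)]; linarith
  refine a9.trans ?_
  gcongr
  have b1 : 1 + M ^ 2 ≤ (2 + c ^ 2) * (s * s) := by nlinarith [sq_nonneg c]
  have b2 : (1 + M ^ 2) * A ≤ (2 + c ^ 2) * (s * s) * A := by gcongr
  have b3 : d ≤ (2 + c ^ 2) * d := by nlinarith [mul_nonneg (sq_nonneg c) hd]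
  calc G ≤ E * (C0 * ((2 + c ^ 2) * (s * s) * A + (2 + c ^ 2) * d)) + 2 * (B * d) := by
        rw [hG]; gcongr
        exact hS.trans (by gcongr)
    _ = _ := by ring

lemma XX_low (τ : ℝ) (hτ : 0 ≤ τ) (u : Sm (m+1)) :
    Real.exp (2 * τ * Real.exp (-8)) * ∫ x in HB m 1, u.1 x ^ 2 ≤ XX m τ u := by
  unfold XX J
  rw [← integral_const_mul]
  refine le_trans ?_ (setIntegral_mono_set (HB_int _ 2)
    (Filter.Eventually.of_forall fun x => sq_nonneg _)
    (HB_mono (by norm_num : (1:ℝ) ≤ 2)).eventuallyLE)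
  have hi : IntegrableOn (fun x => u.1 x ^ 2) (HB m 1) := HB_int (u ^ 2) 1
  refine setIntegral_mono_on (hi.const_mul _) (HB_int _ 1) (HB_meas 1) ?_
  intro x hx
  have hr := rho_lt_of_halfBall (mem_HB.1 hx).1
  have hc : (chi m).1 x = 1 := cut_one (by norm_num) (by linarith)
  simp only [Sm_pow, Sm_mul, hc, mul_pow, one_pow, one_mul]
  gcongr
  rw [ew_apply, ← Real.exp_nat_mul]
  apply Real.exp_le_exp.2
  have : Real.exp (-8) ≤ (phi (b0 m)).1 x := by
    rw [phi_apply]; apply Real.exp_le_exp.2; linarith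
  push_cast
  nlinarith

lemma simp_real {τ P C1 c K N A d e1 e2 : ℝ} (hτ1 : 1 ≤ τ) (hP0 : 0 ≤ P) (hC1 : 0 ≤ C1)
    (hK : 0 ≤ K) (hN : 0 ≤ N) (hA : 0 ≤ A) (hd : 0 ≤ d) (he1 : 0 < e1) (ee : e1 ≤ e2) :
    P * ((C1 + 1) * (2 + c ^ 2) * (τ ^ 6 * (K * e1) * A + (K * e1) * d)
      + 2 * (K * τ ^ 5 * e2 * N) * d)
    ≤ P * ((C1 + 1) * (2 + c ^ 2) * K + 2 * (K * N)) * 2 * τ ^ 6 * (e1 * A + e2 * d) := by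
    have t6 : 1 ≤ τ ^ 6 := one_le_pow₀ hτ1
    have t56 : τ ^ 5 ≤ τ ^ 6 := pow_le_pow_right₀ hτ1 (by norm_num)
    have he2 : 0 < e2 := lt_of_lt_of_le he1 ee
    have z1 : (K * e1) * d ≤ K * (τ ^ 6 * e2 * d) := by
      calc (K * e1) * d = K * (1 * e1 * d) := by ring
        _ ≤ K * (τ ^ 6 * e2 * d) := by gcongr
    have z2 : K * τ ^ 5 * e2 * N * d ≤ K * N * (τ ^ 6 * e2 * d) := by
      calc K * τ ^ 5 * e2 * N * d = K * N * (τ ^ 5 * e2 * d) := by ring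
        _ ≤ _ := by gcongr
    set Z : ℝ := τ ^ 6 * (e1 * A + e2 * d) with hZ
    have hZ0 : 0 ≤ Z := by positivity
    have z3 : τ ^ 6 * (K * e1) * A + (K * e1) * d ≤ K * Z := by
      calc _ ≤ τ ^ 6 * (K * e1) * A + K * (τ ^ 6 * e2 * d) := by gcongr
        _ = K * Z := by rw [hZ]; ring
    have z4 : K * τ ^ 5 * e2 * N * d ≤ K * N * Z := by
      refine z2.trans ?_
      have : τ ^ 6 * e2 * d ≤ Z := by
        have : 0 ≤ τ ^ 6 * (e1 * A) := by positivity
        rw [hZ]; linarith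
      gcongr
    calc _ ≤ P * ((C1 + 1) * (2 + c ^ 2) * (K * Z) + 2 * (K * N * Z)) := by
          have := hP0
          rw [mul_assoc 2 (K * τ ^ 5 * e2 * N)]
          gcongr
      _ = P * ((C1 + 1) * (2 + c ^ 2) * K + 2 * (K * N)) * Z := by ring
      _ ≤ P * ((C1 + 1) * (2 + c ^ 2) * K + 2 * (K * N)) * 2 * Z := by
          have : 0 ≤ P * ((C1 + 1) * (2 + c ^ 2) * K + 2 * (K * N)) * Z := by positivity
          linarith
      _ = _ := by rw [hZ]; ring

set_option maxHeartbeats 1000000 in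
theorem main_est (m : ℕ) : ∃ δ > 0, ∃ β > 0, ∃ C : ℝ, 1 ≤ C ∧ ∃ τ1 : ℝ, 1 ≤ τ1 ∧
    ∀ M : ℝ, 0 ≤ M → ∀ u : Sm (m+1), (∀ x ∈ HB m 2, |(L (L u)).1 x| ≤ M * |u.1 x|) →
    ∀ τ ≥ τ1 * (1 + M ^ (1/3 : ℝ)),
      ∫ x in HB m 1, u.1 x ^ 2 ≤ C * (Real.exp (-(δ * τ)) * J (u ^ 2) + Real.exp (β * τ) * Dat u) := by
  obtain ⟨c, hc, τ0, h0, K, hK, H⟩ := step m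
  obtain ⟨C1, hC1, hcac⟩ := cacc m
  set c1 := Real.exp (-(17/2)) with hc1
  set c2 := Real.exp (-8) with hc2
  have hc12 : c1 < c2 := Real.exp_lt_exp.2 (by norm_num)
  have hc10 : 0 < c1 := Real.exp_pos _
  have hc11 : c1 ≤ 1 := Real.exp_le_one_iff.2 (by norm_num)
  set δ := c2 - c1 with hδ
  have hδ0 : 0 < δ := by linarith
  set N : ℝ := ((m+1 : ℕ) : ℝ) ^ 2 with hN
  have hN1 : 1 ≤ N := by
    have : (1:ℝ) ≤ ((m+1 : ℕ) : ℝ) := by exact_mod_cast Nat.le_add_left 1 m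
    exact one_le_pow₀ this
  set P : ℝ := 2 * (2 + c) / c ^ 2 with hP
  have hP0 : 0 ≤ P := by positivity
  set P2 : ℝ := P * ((C1 + 1) * (2 + c ^ 2) * K + 2 * (K * N)) * (2 : ℝ) with hP2
  have hP20 : 0 ≤ P2 := by positivity
  set Q : ℝ := P2 * (720 / δ ^ 6) with hQ
  have hQ0 : 0 ≤ Q := by positivity
  refine ⟨δ, hδ0, 2 + δ, by positivity, 1 + Q, by linarith, τ0 + 3 / c + 1, ?_, ?_⟩
  · have : 0 < 3 / c := by positivity
    linarith
  intro M hM u hu τ hτ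
  have h3c : 0 < 3 / c := by positivity
  have hM3 : 0 ≤ M ^ (1/3 : ℝ) := by positivity
  set τ1 := τ0 + 3 / c + 1 with hτ1
  have hτ1' : 1 ≤ τ1 := by linarith
  have hτa : τ1 ≤ τ := by nlinarith
  have hτ0 : τ0 ≤ τ := by linarith
  have hτ1 : 1 ≤ τ := by linarith
  have hMt : 3 * M ≤ c * τ ^ 3 := by
    have hb : τ1 * M ^ (1/3 : ℝ) ≤ τ := by nlinarith
    have : (τ1 * M ^ (1/3 : ℝ)) ^ 3 ≤ τ ^ 3 := by gcongr
    rw [mul_pow, ← Real.rpow_natCast (M ^ (1/3 : ℝ)), ← Real.rpow_mul hM] at this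
    norm_num at this
    have h4 : τ1 ≤ τ1 ^ 3 := by nlinarith [mul_pos (by linarith : 0 < τ1) (by linarith : 0 < τ1)]
    have h5 : 3 / c ≤ τ1 ^ 3 := by linarith
    have h6 : 3 / c * M ≤ τ1 ^ 3 * M := by gcongr
    have h7 := mul_le_mul_of_nonneg_left (h6.trans this) hc.le
    have h8 : c * (3 / c * M) = 3 * M := by field_simp
    linarith
  have hD0 : 0 ≤ Dat u := by unfold Dat; positivity
  have hDN : Dat u ≤ N * Dat u := by nlinarith
  have hA0 : 0 ≤ J (u ^ 2) := J_nonneg fun x _ => sq_nonneg _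
  set E := K * Real.exp (2 * τ * c1) with hE
  have s1 := H τ hτ0 u 2 0 (N * Dat u) ((bq0 u).trans hDN) (fun i => (bq1 u i).trans hDN)
  have s2 := H τ hτ0 (L u) 6 4 (N * Dat u) (bqL u) (fun i => bqDL u i)
  rw [pow_zero, one_mul] at s1
  have hcc := hcac M hM u hu
  have hY : XX m τ (L (L u)) ≤ M ^ 2 * XX m τ u := by
    unfold XX
    rw [← J_Cst]
    refine J_mono fun x hx => ?_
    simp only [Sm_mul, Sm_pow, Cst_apply, mul_pow]
    have h1 : (L (L u)).1 x ^ 2 ≤ M ^ 2 * u.1 x ^ 2 := by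
      rw [← sq_abs, ← sq_abs (u.1 x), ← mul_pow]
      have := hu x hx
      gcongr
    calc _ ≤ (ew m τ).1 x ^ 2 * ((chi m).1 x ^ 2 * (M ^ 2 * u.1 x ^ 2)) := by gcongr
      _ = _ := by ring
  have hX0 : 0 ≤ XX m τ u := J_nonneg fun x _ => sq_nonneg _
  have n1 : 0 ≤ J (eta m ^ 2 * Gr u) := J_nonneg fun x _ =>
    mul_nonneg (pow_nonneg (eta_nonneg x) _) (Gr_nonneg _ x)
  have n2 : 0 ≤ J (eta m ^ 4 * L u ^ 2) := J_nonneg fun x _ =>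
    mul_nonneg (pow_nonneg (eta_nonneg x) _) (sq_nonneg _)
  have n3 : 0 ≤ J (eta m ^ 6 * Gr (L u)) := J_nonneg fun x _ =>
    mul_nonneg (pow_nonneg (eta_nonneg x) _) (Gr_nonneg _ x)
  have hE0 : 0 ≤ E := by positivity
  have key := asm_real (c := c) (τ := τ) (X := XX m τ u) (Y := XX m τ (L u)) (E := E)
    (B := K * τ ^ 5 * Real.exp (2 * τ) * N) (M := M)
    (S1 := J (eta m ^ 2 * Gr u) + J (u ^ 2))
    (S2 := J (eta m ^ 6 * Gr (L u)) + J (eta m ^ 4 * L u ^ 2)) (C0 := C1 + 1) (A := J (u ^ 2))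
    (d := Dat u) hc hτ1 hX0 hE0 (by positivity) hM hA0 hD0 (by positivity) (by positivity)
    (by positivity) (by linarith) (by linarith) hMt
    (by
      have : 0 ≤ M ^ 2 * J (u ^ 2) := by positivity
      linarith)
  -- simplify
  have hXe : XX m τ u ≤ P2 * τ ^ 6 * (Real.exp (2 * τ * c1) * J (u ^ 2)
      + Real.exp (2 * τ) * Dat u) := by
    refine key.trans ?_
    exact simp_real hτ1 hP0 hC1 hK (by linarith) hA0 hD0 (Real.exp_pos _) (Real.exp_le_exp.2
      (by nlinarith))
  have ht6 : τ ^ 6 ≤ 720 / δ ^ 6 * Real.exp (δ * τ) := by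
    have := Real.pow_div_factorial_le_exp (δ * τ) (by positivity) 6
    rw [div_le_iff₀ (by positivity)] at this
    norm_num [Nat.factorial] at this
    rw [div_mul_eq_mul_div, le_div_iff₀ (by positivity)]
    rw [mul_pow] at this
    linarith
  have hlow := XX_low (m := m) τ (by linarith) u
  set X := ∫ x in HB m 1, u.1 x ^ 2
  have h9 : Real.exp (2 * τ * c2) * X ≤ Q * Real.exp (δ * τ) * (Real.exp (2 * τ * c1) * J (u ^ 2)
      + Real.exp (2 * τ) * Dat u) := by
    refine (hlow.trans hXe).trans ?_
    calc _ ≤ P2 * (720 / δ ^ 6 * Real.exp (δ * τ)) * (Real.exp (2 * τ * c1) * J (u ^ 2)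
      + Real.exp (2 * τ) * Dat u) := by gcongr
      _ = _ := by rw [hQ]; ring
  have h10 : X ≤ Real.exp (-(2 * τ * c2)) * (Q * Real.exp (δ * τ) *
      (Real.exp (2 * τ * c1) * J (u ^ 2) + Real.exp (2 * τ) * Dat u)) := by
    have := mul_le_mul_of_nonneg_left h9 (Real.exp_pos (-(2 * τ * c2))).le
    rwa [← mul_assoc, ← Real.exp_add, neg_add_cancel, Real.exp_zero, one_mul] at this
  refine h10.trans ?_
  have e1 : Real.exp (-(2 * τ * c2)) * Real.exp (δ * τ) * Real.exp (2 * τ * c1)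
      = Real.exp (-(δ * τ)) := by
    rw [← Real.exp_add, ← Real.exp_add]; congr 1; rw [hδ]; ring
  have e2 : Real.exp (-(2 * τ * c2)) * Real.exp (δ * τ) * Real.exp (2 * τ)
      ≤ Real.exp ((2 + δ) * τ) := by
    rw [← Real.exp_add, ← Real.exp_add]; apply Real.exp_le_exp.2
    have : 0 ≤ 2 * τ * c2 := by positivity
    linarith
  calc _ = Q * (Real.exp (-(2 * τ * c2)) * Real.exp (δ * τ) * Real.exp (2 * τ * c1) * J (u ^ 2)
        + Real.exp (-(2 * τ * c2)) * Real.exp (δ * τ) * Real.exp (2 * τ) * Dat u) := by ring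
    _ ≤ (1 + Q) * (Real.exp (-(δ * τ)) * J (u ^ 2) + Real.exp ((2 + δ) * τ) * Dat u) := by
        rw [e1]; gcongr
        linarith

lemma opt_real {δ β C A d X T : ℝ} (hδ : 0 < δ) (hβ : 0 < β) (hC : 1 ≤ C) (hA : 0 ≤ A)
    (hd : 0 ≤ d) (hXA : X ≤ A) (hT : 0 ≤ T)
    (h : ∀ τ ≥ T, X ≤ C * (Real.exp (-(δ * τ)) * A + Real.exp (β * τ) * d)) :
    X ≤ 2 * C * Real.exp (β * T) * (A ^ (β / (δ + β)) * d ^ (1 - β / (δ + β))) := by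
  set κ := β / (δ + β) with hκ
  have hκ0 : 0 < κ := by positivity
  have hκ1 : κ < 1 := by rw [hκ, div_lt_one (by positivity)]; linarith
  have hE : 1 ≤ Real.exp (β * T) := Real.one_le_exp (by positivity)
  have hR : 0 ≤ A ^ κ * d ^ (1 - κ) := by positivity
  have h1E : 1 ≤ 2 * C * Real.exp (β * T) := by nlinarith
  rcases eq_or_lt_of_le hd with h0 | hd0
  · have hX : X ≤ 0 := by
      have ht : Filter.Tendsto (fun τ : ℝ => C * (Real.exp (-(δ * τ)) * A)) Filter.atTop (nhds 0) := by
        have h1 : Filter.Tendsto (fun τ : ℝ => Real.exp (-(δ * τ))) Filter.atTop (nhds 0) :=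
          Real.tendsto_exp_neg_atTop_nhds_zero.comp
            (Filter.tendsto_id.const_mul_atTop hδ)
        simpa using (h1.mul_const A).const_mul C
      refine ge_of_tendsto ht ?_
      filter_upwards [Filter.eventually_ge_atTop T] with τ hτ
      have := h τ hτ
      rw [← h0] at this
      simpa using this
    exact hX.trans (by positivity)
  rcases le_or_gt A d with hAd | hAd
  · rcases eq_or_lt_of_le hA with hA0 | hA0
    · rw [← hA0] at hXA
      exact hXA.trans (by positivity)
    · have : A ≤ A ^ κ * d ^ (1 - κ) := by
        calc A = A ^ κ * A ^ (1 - κ) := by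
              rw [← Real.rpow_add hA0]; simp
          _ ≤ _ := by gcongr
      nlinarith
  · have hA0 : 0 < A := hd0.trans hAd
    have hl : 0 ≤ Real.log (A / d) := Real.log_nonneg (by rw [le_div_iff₀ hd0]; linarith)
    set s := Real.log (A / d) / (δ + β) with hs
    have hs0 : 0 ≤ s := by positivity
    have := h (T + s) (by linarith)
    have eA : A = Real.exp (Real.log A) := (Real.exp_log hA0).symm
    have ed : d = Real.exp (Real.log d) := (Real.exp_log hd0).symm
    have hld : Real.log (A / d) = Real.log A - Real.log d := Real.log_div hA0.ne' hd0.ne'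
    have eR : A ^ κ * d ^ (1 - κ) = Real.exp (Real.log A * κ + Real.log d * (1 - κ)) := by
      rw [Real.rpow_def_of_pos hA0, Real.rpow_def_of_pos hd0, Real.exp_add]
    have f1 : Real.exp (-(δ * (T + s))) * A ≤ A ^ κ * d ^ (1 - κ) := by
      rw [eR]
      nth_rewrite 1 [eA]
      rw [← Real.exp_add]
      apply Real.exp_le_exp.2
      have e : -(δ * s) + Real.log A = Real.log A * κ + Real.log d * (1 - κ) := by
        rw [hs, hκ, hld]; field_simp; ring
      have : 0 ≤ δ * T := by positivity
      linarith
    have f2 : Real.exp (β * (T + s)) * d = Real.exp (β * T) * (A ^ κ * d ^ (1 - κ)) := by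
      rw [eR]
      nth_rewrite 1 [ed]
      rw [← Real.exp_add, ← Real.exp_add]
      congr 1
      rw [hs, hκ, hld]; field_simp; ring
    rw [f2] at this
    refine this.trans ?_
    have f3 : Real.exp (-(δ * (T + s))) * A ≤ Real.exp (β * T) * (A ^ κ * d ^ (1 - κ)) := by
      nlinarith
    nlinarith

end

theorem stmt_12 (n : ℕ) (hn : 2 ≤ n) :
    ∃ κ : ℝ, κ ∈ Set.Ioo (0 : ℝ) 1 ∧ ∃ C : ℝ, 0 < C ∧
      ∀ (W : EuclideanSpace ℝ (Fin n) → ℝ), Measurable W →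
      ∀ (M : ℝ), 0 ≤ M → (∀ x, |W x| ≤ M) →
      ∀ (u : EuclideanSpace ℝ (Fin n) → ℝ), ContDiff ℝ (⊤ : ℕ∞) u →
        (∀ x ∈ halfBall n (by omega) 3, lap (lap u) x = W x * u x) →
        (∫ x in halfBall n (by omega) 1, (u x) ^ 2) ^ (1 / 2 : ℝ)
          ≤ Real.exp (C * (1 + M ^ (1 / 3 : ℝ)))
            * ((∫ x in halfBall n (by omega) 2, (u x) ^ 2) ^ (1 / 2 : ℝ)) ^ κ
            * (∑ j ∈ Finset.range 4,
                Real.sqrt (bdryHnormSq n (3 - j) 2 ((pd (lastIdx n (by omega)))^[j] u)))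
              ^ (1 - κ) := by
  obtain ⟨m, rfl⟩ : ∃ m, n = m + 1 := ⟨n - 1, by omega⟩
  obtain ⟨δ, hδ, β, hβ, C, hC, τ1, hτ1, H⟩ := main_est m
  have hκ0 : 0 < β / (δ + β) := by positivity
  have hκ1 : β / (δ + β) < 1 := by rw [div_lt_one (by positivity)]; linarith
  refine ⟨β / (δ + β), ⟨hκ0, hκ1⟩, 2 * C + β * τ1, by positivity, ?_⟩
  intro W _ M hM hW u hu heq
  set U : Sm (m+1) := ⟨u, hu⟩ with hU
  have hb : ∀ R, halfBall (m+1) (by omega) R = HB m R := fun R => rfl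
  have hL : (L (L U)).1 = lap (lap u) := by rw [L_coe, L_coe]
  have hbd : ∀ x ∈ HB m 2, |(L (L U)).1 x| ≤ M * |U.1 x| := by
    intro x hx
    rw [hL, heq x (HB_mono (by norm_num) hx), abs_mul]
    exact mul_le_mul_of_nonneg_right (hW x) (abs_nonneg _)
  set A := ∫ x in halfBall (m+1) (by omega) 2, (u x) ^ 2 with hA
  set X := ∫ x in halfBall (m+1) (by omega) 1, (u x) ^ 2 with hX
  set S := ∑ j ∈ Finset.range 4,
      Real.sqrt (bdryHnormSq (m+1) (3 - j) 2 ((pd (lastIdx (m+1) (by omega)))^[j] u)) with hS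
  have hS0 : 0 ≤ S := Finset.sum_nonneg fun _ _ => Real.sqrt_nonneg _
  have hD : Dat U = S ^ 2 := rfl
  have hA0 : 0 ≤ A := integral_nonneg fun x => sq_nonneg _
  have hX0 : 0 ≤ X := integral_nonneg fun x => sq_nonneg _
  have hAi : IntegrableOn (fun x => u x ^ 2) (HB m 2) := HB_int (U ^ 2) 2
  have hXA : X ≤ A := setIntegral_mono_set hAi (Filter.Eventually.of_forall fun x => sq_nonneg _)
    (HB_mono (by norm_num : (1:ℝ) ≤ 2)).eventuallyLE
  have hM3 : 0 ≤ M ^ (1/3 : ℝ) := by positivity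
  have key := opt_real (T := τ1 * (1 + M ^ (1/3 : ℝ))) (d := S ^ 2) hδ hβ hC hA0 (sq_nonneg S) hXA
    (by positivity) (fun τ hτ => H M hM U hbd τ hτ)
  set κ := β / (δ + β)
  have hE : 1 ≤ Real.exp (β * (τ1 * (1 + M ^ (1/3 : ℝ)))) := Real.one_le_exp (by positivity)
  set G := 2 * C * Real.exp (β * (τ1 * (1 + M ^ (1/3 : ℝ)))) with hG
  have hG1 : 1 ≤ G := by nlinarith
  have hGe : G ≤ Real.exp ((2 * C + β * τ1) * (1 + M ^ (1/3 : ℝ))) := by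
    have h1 : 2 * C ≤ Real.exp (2 * C * (1 + M ^ (1/3 : ℝ))) := by
      have := Real.add_one_le_exp (2 * C * (1 + M ^ (1/3 : ℝ)))
      have : 0 ≤ 2 * C * M ^ (1/3 : ℝ) := by positivity
      linarith
    calc G ≤ Real.exp (2 * C * (1 + M ^ (1/3 : ℝ))) * Real.exp (β * (τ1 * (1 + M ^ (1/3 : ℝ)))) := by
          rw [hG]; gcongr
      _ = _ := by rw [← Real.exp_add]; congr 1; ring
  have hGh : G ^ (1/2 : ℝ) ≤ G := by
    calc G ^ (1/2 : ℝ) ≤ G ^ (1 : ℝ) := Real.rpow_le_rpow_of_exponent_le hG1 (by norm_num)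
      _ = G := Real.rpow_one G
  have hSS : (S ^ 2) ^ (1 / 2 : ℝ) = S := by
    rw [← Real.sqrt_eq_rpow, Real.sqrt_sq hS0]
  have hcomm : ∀ {a b c : ℝ}, 0 ≤ a → (a ^ b) ^ c = (a ^ c) ^ b := fun {a b c} ha => by
    rw [← Real.rpow_mul ha, ← Real.rpow_mul ha, mul_comm]
  clear_value G
  calc X ^ (1/2 : ℝ) ≤ (G * (A ^ κ * (S ^ 2) ^ (1 - κ))) ^ (1/2 : ℝ) := by gcongr
    _ = G ^ (1/2 : ℝ) * ((A ^ (1/2 : ℝ)) ^ κ * S ^ (1 - κ)) := by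
        rw [Real.mul_rpow (x := G) (by linarith) (by positivity),
          Real.mul_rpow (x := A ^ κ) (by positivity) (by positivity),
          hcomm (b := κ) (c := 1/2) hA0, hcomm (b := 1 - κ) (c := 1/2) (sq_nonneg S), hSS]
    _ ≤ Real.exp ((2 * C + β * τ1) * (1 + M ^ (1/3 : ℝ))) * ((A ^ (1/2 : ℝ)) ^ κ * S ^ (1 - κ)) := by
        gcongr
        exact hGh.trans hGe
    _ = _ := by ring
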